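/- Let X = {(R₋,S₋,R₊,S₊) ∈ SU(2)⁴ : R₋S₋R₋⁻¹S₋⁻¹R₊S₊R₊⁻¹S₊⁻¹ = 1}, topologized as a subspace of ℍ⁴, and let χ(F₂) be the quotient of X, with the quotient topology, by the action of SU(2) by simultaneous conjugation. Then χ(F₂) is homeomorphic to the complex projective space ℂP³, the projectivization of the complex vector space ℂ⁴. -/

import Mathlib

noncomputable section

/-- The condition defining the representation space of the genus two surface group:
quadruples `(R₋, S₋, R₊, S₊)` of unit quaternions (elements of `SU(2)`) satisfying the
genus two surface relation `[R₋,S₋][R₊,S₊] = 1`. -/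
def memX (t : Quaternion ℝ × Quaternion ℝ × Quaternion ℝ × Quaternion ℝ) : Prop :=
  ‖t.1‖ = 1 ∧ ‖t.2.1‖ = 1 ∧ ‖t.2.2.1‖ = 1 ∧ ‖t.2.2.2‖ = 1 ∧
    t.1 * t.2.1 * t.1⁻¹ * t.2.1⁻¹ * (t.2.2.1 * t.2.2.2 * t.2.2.1⁻¹ * t.2.2.2⁻¹) = 1

/-- The representation space `X ⊂ ℍ⁴`, with the subspace topology. -/
abbrev GenusTwoRepSpace : Type := {t // memX t}

/-- Two points of `X` are related iff they are simultaneously conjugate by a unit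
quaternion `u ∈ SU(2)`. -/
def conjRel (s t : GenusTwoRepSpace) : Prop :=
  ∃ u : Quaternion ℝ, ‖u‖ = 1 ∧
    t.1.1 = u * s.1.1 * u⁻¹ ∧ t.1.2.1 = u * s.1.2.1 * u⁻¹ ∧
    t.1.2.2.1 = u * s.1.2.2.1 * u⁻¹ ∧ t.1.2.2.2 = u * s.1.2.2.2 * u⁻¹

/-- The `SU(2)` character variety `χ(F₂)` of the genus two surface: the quotient of `X`
by simultaneous conjugation, with the quotient topology. -/
abbrev ChiF2 : Type := Quot conjRel

/-- Nonzero vectors of `ℂ⁴`. -/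
def projRel (v w : {v : Fin 4 → ℂ // v ≠ 0}) : Prop := ∃ c : ℂ, c ≠ 0 ∧ w.1 = c • v.1

/-- `ℂP³`: the projectivization of `ℂ⁴`, i.e. nonzero vectors of `ℂ⁴` modulo nonzero
complex scalars, with the quotient topology. -/
abbrev CP3 : Type := Quot projRel

/-!
The genus two surface is cut along a separating curve into two punctured tori, so a representation
is a pair of pairs `(T, S)`, `(T', S')` of unit quaternions with a common commutator `c`. Each such
pair has a balanced square root `g` of `-c`, for which `g⁻¹T`, `gS` and `Sg⁻¹T` are imaginary: if
`c ≠ 1`, the normalisation of `1 - c` works, and if `c = 1`, any imaginary unit orthogonal to the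
axis of the commuting pair. In either case the two pairs have a common root. After conjugating
`g` onto the circle `ℝ ⊕ ℝk`, each half is determined by the position of three imaginary units, that
is, by a parameter `D ∈ [0, 1]` depending on `g` and a frame in `SU(2)`. This makes `X` a quotient
of `SU(2) × [0, 1] × SU(2) × SU(2)`.

On the other side, by singular value decomposition every nonzero complex `2 × 2` matrix is, up to a
scalar, `y⁻¹ diag(1, m) y'` with `y, y' ∈ SU(2)` and `‖m‖ ≤ 1`. Taking `m` to be a suitable function
of `D`, `y` and `y'`, built from a foliation of the unit disk by ellipses, makes `[0, 1] × SU(2)²`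
map onto `ℙ(M₂(ℂ)) = ℂP³`, in such a way that two triples have the same image exactly when the
representations they define are conjugate. So `χ(F₂)` and `ℂP³` are quotients of one compact space
by the same relation.
-/

open ComplexConjugate Quaternion Topology commutatorElement
open ConjAct (toConjAct)

/-! ### Unit quaternions -/

/-- The group `SU(2)`, realised as the unit sphere of `ℍ`. -/
def UnitQuat : Type := Metric.sphere (0 : ℍ[ℝ]) 1

namespace UnitQuat

instance : Group UnitQuat := inferInstanceAs (Group (Metric.sphere (0 : ℍ[ℝ]) 1))

instance : HasDistribNeg UnitQuat := inferInstanceAs (HasDistribNeg (Metric.sphere (0 : ℍ[ℝ]) 1))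

instance : TopologicalSpace UnitQuat :=
  inferInstanceAs (TopologicalSpace (Metric.sphere (0 : ℍ[ℝ]) 1))

instance : IsTopologicalGroup UnitQuat :=
  inferInstanceAs (IsTopologicalGroup (Metric.sphere (0 : ℍ[ℝ]) 1))

instance : CompactSpace UnitQuat := inferInstanceAs (CompactSpace (Metric.sphere (0 : ℍ[ℝ]) 1))

instance : CoeOut UnitQuat ℍ[ℝ] := ⟨Subtype.val⟩

theorem coe_one : ((1 : UnitQuat) : ℍ[ℝ]) = 1 := rfl

theorem coe_neg (q : UnitQuat) : (↑(-q) : ℍ[ℝ]) = -q := rfl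

theorem coe_mul (p q : UnitQuat) : (↑(p * q) : ℍ[ℝ]) = p * q := rfl

theorem coe_inv (q : UnitQuat) : (↑q⁻¹ : ℍ[ℝ]) = (q : ℍ[ℝ])⁻¹ := rfl

theorem norm_coe (q : UnitQuat) : ‖(q : ℍ[ℝ])‖ = 1 := norm_eq_of_mem_sphere q

end UnitQuat

/-- The `ℝ ⊕ ℝk`-component of a unit quaternion: writing `q = a + b i` with `a, b ∈ ℝ ⊕ ℝk ≅ ℂ`,
where `k` plays the role of the imaginary unit, `axial q` is `a`. -/
def axial (q : UnitQuat) : ℂ := ⟨q.1.re, q.1.imK⟩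

/-- The `ℝi ⊕ ℝj`-component of a unit quaternion: the coefficient `b` in `q = a + b i`
with `a, b ∈ ℝ ⊕ ℝk ≅ ℂ`. -/
def transverse (q : UnitQuat) : ℂ := ⟨q.1.imI, q.1.imJ⟩

namespace UnitQuat

@[ext]
theorem ext {p q : UnitQuat} (ha : axial p = axial q) (hb : transverse p = transverse q) :
    p = q := by
  simp only [axial, transverse, Complex.mk.injEq] at ha hb
  exact Subtype.ext (Quaternion.ext _ _ ha.1 hb.1 hb.2 ha.2)

theorem coe_inv_eq_star (q : UnitQuat) : (↑q⁻¹ : ℍ[ℝ]) = star (q : ℍ[ℝ]) := by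
  rw [coe_inv, Quaternion.inv_def, Quaternion.normSq_eq_norm_mul_self, norm_coe, one_mul, inv_one,
    one_smul]

@[simp]
theorem axial_one : axial 1 = 1 := by simp [axial, coe_one, Complex.ext_iff]

@[simp]
theorem transverse_one : transverse 1 = 0 := by simp [transverse, coe_one, Complex.ext_iff]

@[simp]
theorem axial_neg (q : UnitQuat) : axial (-q) = -axial q := by
  simp [axial, coe_neg, Complex.ext_iff]

@[simp]
theorem transverse_neg (q : UnitQuat) : transverse (-q) = -transverse q := by
  simp [transverse, coe_neg, Complex.ext_iff]

theorem axial_mul (p q : UnitQuat) :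
    axial (p * q) = axial p * axial q - transverse p * conj (transverse q) := by
  apply Complex.ext <;> simp [axial, transverse, coe_mul] <;> ring

theorem transverse_mul (p q : UnitQuat) :
    transverse (p * q) = axial p * transverse q + transverse p * conj (axial q) := by
  apply Complex.ext <;> simp [axial, transverse, coe_mul] <;> ring

@[simp]
theorem axial_inv (q : UnitQuat) : axial q⁻¹ = conj (axial q) := by
  simp [axial, coe_inv_eq_star, Complex.ext_iff]

@[simp]
theorem transverse_inv (q : UnitQuat) : transverse q⁻¹ = -transverse q := by
  simp [transverse, coe_inv_eq_star, Complex.ext_iff]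

theorem norm_sq_add (q : UnitQuat) : ‖axial q‖ ^ 2 + ‖transverse q‖ ^ 2 = 1 := by
  have h : Quaternion.normSq (q : ℍ[ℝ]) = 1 := by
    rw [Quaternion.normSq_eq_norm_mul_self, norm_coe, one_mul]
  rw [Quaternion.normSq_def'] at h
  rw [← Complex.normSq_eq_norm_sq, ← Complex.normSq_eq_norm_sq, Complex.normSq_apply,
    Complex.normSq_apply]
  simp only [axial, transverse]
  linear_combination h

theorem re_axial_le_one (q : UnitQuat) : (axial q).re ≤ 1 := by
  refine (Complex.re_le_norm _).trans ((sq_le_one_iff₀ (norm_nonneg _)).1 ?_)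
  linarith [q.norm_sq_add, sq_nonneg ‖transverse q‖]

theorem mul_conj_add (q : UnitQuat) :
    axial q * conj (axial q) + transverse q * conj (transverse q) = 1 := by
  rw [Complex.mul_conj', Complex.mul_conj']
  exact_mod_cast q.norm_sq_add

/-- The unit quaternion `a + b i` with `a, b ∈ ℝ ⊕ ℝk ≅ ℂ`. -/
def mk (a b : ℂ) (h : ‖a‖ ^ 2 + ‖b‖ ^ 2 = 1) : UnitQuat :=
  ⟨Quaternion.linearIsometryEquivTuple.symm !₂[a.re, b.re, b.im, a.im], by
    rw [mem_sphere_zero_iff_norm, LinearIsometryEquiv.norm_map,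
      ← sq_eq_sq₀ (norm_nonneg _) zero_le_one, EuclideanSpace.norm_sq_eq, one_pow, ← h,
      ← Complex.normSq_eq_norm_sq, ← Complex.normSq_eq_norm_sq, Complex.normSq_apply,
      Complex.normSq_apply]
    simp [Fin.sum_univ_four]
    ring⟩

@[simp]
theorem axial_mk (a b : ℂ) (h) : axial (mk a b h) = a := rfl

@[simp]
theorem transverse_mk (a b : ℂ) (h) : transverse (mk a b h) = b := rfl

theorem exists_pos_smul_of_ne_zero {a b : ℂ} (h : a ≠ 0 ∨ b ≠ 0) :
    ∃ (r : ℝ) (q : UnitQuat), 0 < r ∧ axial q = r * a ∧ transverse q = r * b := by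
  have hpos : 0 < ‖a‖ ^ 2 + ‖b‖ ^ 2 := by
    rcases h with h | h <;> have := norm_pos_iff.2 h <;> positivity
  have hr : 0 < (√(‖a‖ ^ 2 + ‖b‖ ^ 2))⁻¹ := inv_pos.2 (Real.sqrt_pos.2 hpos)
  refine ⟨_, mk (_ * a) (_ * b) ?_, hr, axial_mk .., transverse_mk ..⟩
  rw [norm_mul, norm_mul, Complex.norm_of_nonneg hr.le, mul_pow, mul_pow, ← mul_add, inv_pow,
    Real.sq_sqrt hpos.le, inv_mul_cancel₀ hpos.ne']

theorem continuous_axial : Continuous axial := by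
  refine (Complex.equivRealProdCLM.symm.continuous.comp
    ((Quaternion.continuous_re.comp continuous_subtype_val).prodMk
      (Quaternion.continuous_imK.comp continuous_subtype_val))).congr fun q ↦ ?_
  simp [axial, Complex.ext_iff]

theorem continuous_transverse : Continuous transverse := by
  refine (Complex.equivRealProdCLM.symm.continuous.comp
    ((Quaternion.continuous_imI.comp continuous_subtype_val).prodMk
      (Quaternion.continuous_imJ.comp continuous_subtype_val))).congr fun q ↦ ?_
  simp [transverse, Complex.ext_iff]

theorem continuous_mk {E : Type*} [TopologicalSpace E] {a b : E → ℂ} (ha : Continuous a)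
    (hb : Continuous b) (h : ∀ t, ‖a t‖ ^ 2 + ‖b t‖ ^ 2 = 1) :
    Continuous fun t ↦ mk (a t) (b t) (h t) := by
  refine (Quaternion.linearIsometryEquivTuple.symm.continuous.comp
    ((PiLp.continuous_toLp 2 _).comp (continuous_pi fun i ↦ ?_))).subtype_mk _
  fin_cases i
  exacts [Complex.continuous_re.comp ha, Complex.continuous_re.comp hb,
    Complex.continuous_im.comp hb, Complex.continuous_im.comp ha]

end UnitQuat

namespace UnitQuat

theorem axial_mul_conj_of_transverse_eq_zero {u : UnitQuat} (hu : transverse u = 0) :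
    axial u * conj (axial u) = 1 := by
  simpa [hu] using u.mul_conj_add

theorem norm_axial_of_transverse_eq_zero {u : UnitQuat} (hu : transverse u = 0) :
    ‖axial u‖ = 1 := by
  simpa [hu, pow_eq_one_iff_of_nonneg] using u.norm_sq_add

theorem norm_transverse_of_axial_eq_zero {u : UnitQuat} (hu : axial u = 0) :
    ‖transverse u‖ = 1 := by
  simpa [hu, pow_eq_one_iff_of_nonneg] using u.norm_sq_add

theorem axial_conj_of_transverse_eq_zero {u : UnitQuat} (hu : transverse u = 0) (q : UnitQuat) :
    axial (u * q * u⁻¹) = axial q := by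
  simp only [axial_mul, transverse_mul, axial_inv, transverse_inv, hu, map_neg, map_zero]
  linear_combination axial q * axial_mul_conj_of_transverse_eq_zero hu

theorem transverse_conj_of_transverse_eq_zero {u : UnitQuat} (hu : transverse u = 0)
    (q : UnitQuat) : transverse (u * q * u⁻¹) = axial u ^ 2 * transverse q := by
  simp only [axial_mul, transverse_mul, axial_inv, transverse_inv, hu, Complex.conj_conj]
  ring

theorem transverse_pow_of_transverse_eq_zero {u : UnitQuat} (hu : transverse u = 0) (n : ℕ) :
    transverse (u ^ n) = 0 := by
  induction n with
  | zero => rw [pow_zero, transverse_one]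
  | succ n ih => rw [pow_succ, transverse_mul, ih, hu, mul_zero, zero_mul, add_zero]

theorem axial_pow_of_transverse_eq_zero {u : UnitQuat} (hu : transverse u = 0) (n : ℕ) :
    axial (u ^ n) = axial u ^ n := by
  induction n with
  | zero => rw [pow_zero, pow_zero, axial_one]
  | succ n ih => rw [pow_succ, axial_mul, ih, hu, map_zero, mul_zero, sub_zero, pow_succ]

theorem re_axial_mul_comm (p q : UnitQuat) : (axial (p * q)).re = (axial (q * p)).re := by
  simp only [axial_mul, Complex.sub_re, Complex.mul_re, Complex.conj_re, Complex.conj_im]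
  ring

@[simp]
theorem re_axial_conj (u q : UnitQuat) : (axial (u * q * u⁻¹)).re = (axial q).re := by
  rw [re_axial_mul_comm, inv_mul_cancel_left]

theorem inv_eq_neg_iff {q : UnitQuat} : q⁻¹ = -q ↔ (axial q).re = 0 := by
  rw [UnitQuat.ext_iff, axial_inv, axial_neg, transverse_inv, transverse_neg, Complex.ext_iff]
  simp [self_eq_neg]

theorem exists_transverse_eq_zero_sq_eq {z : ℂ} (hz : ‖z‖ = 1) :
    ∃ u : UnitQuat, transverse u = 0 ∧ axial u ^ 2 = z := by
  obtain ⟨w, hw⟩ := IsAlgClosed.exists_pow_nat_eq z two_pos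
  have hw1 : ‖w‖ ^ 2 = 1 := by rw [← norm_pow, hw, hz]
  exact ⟨mk w 0 (by simp [hw1]), by simp, hw⟩

theorem eq_one_or_eq_neg_one_of_conj {u q : UnitQuat} (h : transverse (u * q * u⁻¹) = 0)
    (h' : (axial (u * q * u⁻¹)).im = 0) : q = 1 ∨ q = -1 := by
  have hre : (axial (u * q * u⁻¹)).re ^ 2 = 1 := by
    have := norm_axial_of_transverse_eq_zero h
    rw [← sq_eq_sq₀ (norm_nonneg _) zero_le_one, ← Complex.normSq_eq_norm_sq,
      Complex.normSq_apply, h'] at this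
    linarith
  rcases sq_eq_one_iff.1 hre with hre | hre
  · have : u * q * u⁻¹ = 1 := UnitQuat.ext (Complex.ext (by simpa using hre) (by simpa using h'))
      (by simpa using h)
    exact .inl (conj_eq_one_iff.1 this)
  · have : u * q * u⁻¹ = -1 := UnitQuat.ext (Complex.ext (by simpa using hre) (by simpa using h'))
      (by simpa using h)
    rw [mul_inv_eq_iff_eq_mul, neg_one_mul, ← mul_neg_one, mul_right_inj] at this
    exact .inr this

/- With `s` the length of the imaginary part `v` of `q`, the conjugating element is a multiple of
`v + s k`; it degenerates only when `v = -s k`, in which case `i` does the job. -/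
theorem exists_conj_transverse_eq_zero (q : UnitQuat) :
    ∃ u : UnitQuat, transverse (u * q * u⁻¹) = 0 ∧ 0 ≤ (axial (u * q * u⁻¹)).im := by
  set a := axial q with ha
  set b := transverse q with hb
  set s := √(a.im ^ 2 + ‖b‖ ^ 2) with hs
  have hs2 : (s : ℂ) ^ 2 = a.im ^ 2 + b * conj b := by
    rw [Complex.mul_conj']
    exact_mod_cast Real.sq_sqrt (by positivity : 0 ≤ a.im ^ 2 + ‖b‖ ^ 2)
  by_cases hv : (a.im : ℂ) + s = 0 ∧ b = 0
  · have him : a.im ≤ 0 := by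
      have : a.im + s = 0 := by exact_mod_cast hv.1
      linarith [Real.sqrt_nonneg (a.im ^ 2 + ‖b‖ ^ 2)]
    refine ⟨mk 0 1 (by simp), ?_, ?_⟩ <;>
      simp [axial_mul, transverse_mul, ← ha, ← hb, hv.2, him]
  · obtain ⟨r, y, -, hya, hyb⟩ := exists_pos_smul_of_ne_zero (a := Complex.I * (a.im + s))
      (b := b) (by simpa [or_iff_not_and_not] using hv)
    have ht : ‖(a.re + s * Complex.I : ℂ)‖ ^ 2 + ‖(0 : ℂ)‖ ^ 2 = 1 := by
      rw [← q.norm_sq_add, ← Complex.normSq_eq_norm_sq, Complex.normSq_add_mul_I, hs,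
        Real.sq_sqrt (by positivity), ← Complex.normSq_eq_norm_sq (axial q), Complex.normSq_apply,
        norm_zero]
      ring
    have hcomm : q * y = y * mk (a.re + s * Complex.I) 0 ht := by
      ext
      · simp only [axial_mul, hya, hyb, axial_mk, transverse_mk, map_mul, map_zero,
          Complex.conj_ofReal, ← ha, ← hb]
        linear_combination (-Complex.I * r * (a.im + s)) * Complex.re_add_im a + r * hs2 +
          (r * (a.im ^ 2 - s ^ 2)) * Complex.I_sq
      · simp only [transverse_mul, hya, hyb, axial_mk, transverse_mk, map_mul, map_add,
          Complex.conj_I, Complex.conj_ofReal, ← ha, ← hb]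
        linear_combination (-r * b) * Complex.re_add_im a
    refine ⟨y⁻¹, ?_⟩
    rw [mul_assoc, inv_inv, hcomm, inv_mul_cancel_left]
    simp [s, Real.sqrt_nonneg]

theorem transverse_eq_zero_of_commute {t q : UnitQuat} (ht : transverse t = 0)
    (ht' : (axial t).im ≠ 0) (h : Commute t q) : transverse q = 0 := by
  have key : (axial t - conj (axial t)) * transverse q = 0 := by
    have := congrArg transverse h.eq
    simp only [transverse_mul, ht, zero_mul, mul_zero, add_zero, zero_add] at this
    linear_combination this
  refine (mul_eq_zero.1 key).resolve_left fun h0 ↦ ht' ?_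
  rw [Complex.sub_conj] at h0
  simpa using h0

theorem exists_conj_transverse_eq_zero_of_commute {p q : UnitQuat} (h : Commute p q) :
    ∃ u : UnitQuat, transverse (u * p * u⁻¹) = 0 ∧ transverse (u * q * u⁻¹) = 0 := by
  obtain ⟨u, hu, -⟩ := exists_conj_transverse_eq_zero p
  by_cases him : (axial (u * p * u⁻¹)).im = 0
  · obtain ⟨w, hw, -⟩ := exists_conj_transverse_eq_zero q
    refine ⟨w, ?_, hw⟩
    rcases eq_one_or_eq_neg_one_of_conj hu him with rfl | rfl <;> simp
  · exact ⟨u, hu, transverse_eq_zero_of_commute hu him ((Commute.conj_iff u).2 h)⟩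

theorem commute_of_commute_of_commute {t p q : UnitQuat} (h1 : t ≠ 1) (h2 : t ≠ -1)
    (hp : Commute t p) (hq : Commute t q) : Commute p q := by
  obtain ⟨u, hu, -⟩ := exists_conj_transverse_eq_zero t
  have him : (axial (u * t * u⁻¹)).im ≠ 0 := fun h ↦
    (eq_one_or_eq_neg_one_of_conj hu h).elim h1 h2
  have hp' := transverse_eq_zero_of_commute hu him ((Commute.conj_iff u).2 hp)
  have hq' := transverse_eq_zero_of_commute hu him ((Commute.conj_iff u).2 hq)
  refine (Commute.conj_iff u).1 (ext ?_ ?_)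
  · rw [axial_mul _ (u * q * u⁻¹), axial_mul _ (u * p * u⁻¹), hp', hq', mul_comm]
  · rw [transverse_mul _ (u * q * u⁻¹), transverse_mul _ (u * p * u⁻¹), hp', hq']
    ring

theorem eq_or_eq_neg_of_conj_eq_conj {p q u w : UnitQuat} (h : ¬ Commute p q)
    (hp : w * p * w⁻¹ = u * p * u⁻¹) (hq : w * q * w⁻¹ = u * q * u⁻¹) : w = u ∨ w = -u := by
  have commute_of {r : UnitQuat} (hr : w * r * w⁻¹ = u * r * u⁻¹) : Commute (u⁻¹ * w) r := by
    rw [mul_inv_eq_iff_eq_mul] at hr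
    rw [Commute, SemiconjBy, mul_assoc, hr]
    group
  by_contra! hne
  refine h (commute_of_commute_of_commute (fun h1 ↦ hne.1 ?_) (fun h1 ↦ hne.2 ?_)
    (commute_of hp) (commute_of hq))
  · rwa [inv_mul_eq_one, eq_comm] at h1
  · rw [inv_mul_eq_iff_eq_mul] at h1
    simpa using h1

end UnitQuat

/-! ### Commutator roots -/

/-- `g` is a balanced square root of `-⁅T, S⁆` (see `IsCommutatorRoot.commutator_eq`): the
quaternions `g⁻¹T`, `gS` and `S g⁻¹ T` are purely imaginary. -/
structure IsCommutatorRoot (g T S : UnitQuat) : Prop where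
  re_left : (axial (g⁻¹ * T)).re = 0
  re_right : (axial (g * S)).re = 0
  re_mid : (axial (S * g⁻¹ * T)).re = 0

namespace IsCommutatorRoot

theorem commutator_eq {g T S : UnitQuat} (h : IsCommutatorRoot g T S) : ⁅T, S⁆ = -g ^ 2 := by
  have hT : T⁻¹ = -(g⁻¹ * T * g⁻¹) := by
    rw [← neg_mul, ← UnitQuat.inv_eq_neg_iff.2 h.re_left]
    group
  have hS : S⁻¹ = -(g * S * g) := by
    rw [← neg_mul, ← UnitQuat.inv_eq_neg_iff.2 h.re_right]
    group
  calc ⁅T, S⁆ = T * (S * g⁻¹ * T) * S * g := by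
        rw [commutatorElement_def, hT, hS]
        simp only [mul_neg, neg_mul, neg_neg, mul_assoc, inv_mul_cancel_left]
    _ = T * -(S * g⁻¹ * T)⁻¹ * S * g := by rw [UnitQuat.inv_eq_neg_iff.2 h.re_mid, neg_neg]
    _ = -g ^ 2 := by
        simp only [mul_neg, neg_mul, neg_inj, sq]
        group

theorem map_conj {g T S : UnitQuat} (h : IsCommutatorRoot g T S) (u : UnitQuat) :
    IsCommutatorRoot (u * g * u⁻¹) (u * T * u⁻¹) (u * S * u⁻¹) := by
  constructor
  · rw [conj_inv, conj_mul, UnitQuat.re_axial_conj, h.re_left]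
  · rw [conj_mul, UnitQuat.re_axial_conj, h.re_right]
  · rw [conj_inv, conj_mul, conj_mul, UnitQuat.re_axial_conj, h.re_mid]

theorem of_axial_eq_zero {g T S : UnitQuat} (hg : axial g = 0) (hT : transverse T = 0)
    (hS : transverse S = 0) : IsCommutatorRoot g T S := by
  constructor <;> simp [UnitQuat.axial_mul, UnitQuat.transverse_mul, hg, hT, hS]

theorem of_axial_conj_eq_zero {g T S u : UnitQuat} (hg : axial (u * g * u⁻¹) = 0)
    (hT : transverse (u * T * u⁻¹) = 0) (hS : transverse (u * S * u⁻¹) = 0) :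
    IsCommutatorRoot g T S := by
  have key := (of_axial_eq_zero hg hT hS).map_conj u⁻¹
  simpa only [inv_inv, mul_assoc, inv_mul_cancel_left, inv_mul_cancel, mul_one] using key

/- A square root of `-c` in `SU(2)` is the normalisation of `1 - c`, as
`(1 - c) / (1 - c⁻¹) = -c`. -/
theorem of_eq_smul {g T S : UnitQuat} {r : ℝ} (ha : axial g = r * (1 - axial ⁅T, S⁆))
    (hb : transverse g = r * (0 - transverse ⁅T, S⁆)) : IsCommutatorRoot g T S := by
  have re_mul (q : UnitQuat) :
      (axial (g * q)).re = r * ((axial q).re - (axial (⁅T, S⁆ * q)).re) := by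
    rw [UnitQuat.axial_mul, UnitQuat.axial_mul, ha, hb]
    simp
    ring
  have re_inv_mul (q : UnitQuat) :
      (axial (g⁻¹ * q)).re = r * ((axial q).re - (axial (⁅T, S⁆⁻¹ * q)).re) := by
    rw [UnitQuat.axial_mul, UnitQuat.axial_mul, UnitQuat.axial_inv, UnitQuat.transverse_inv,
      UnitQuat.axial_inv, UnitQuat.transverse_inv, ha, hb]
    simp
    ring
  constructor
  · rw [re_inv_mul, commutatorElement_inv, commutatorElement_def, inv_mul_cancel_right,
      UnitQuat.re_axial_conj, sub_self, mul_zero]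
  · rw [re_mul, commutatorElement_def, inv_mul_cancel_right, UnitQuat.re_axial_conj, sub_self,
      mul_zero]
  · have hcomm : ⁅T, S⁆⁻¹ * (T * S) = S * T := by
      rw [commutatorElement_inv, commutatorElement_def]
      group
    rw [mul_assoc, UnitQuat.re_axial_mul_comm, mul_assoc, re_inv_mul, hcomm,
      UnitQuat.re_axial_mul_comm, sub_self, mul_zero]

end IsCommutatorRoot

namespace UnitQuat

theorem exists_axial_conj_eq_zero (u w : UnitQuat) :
    ∃ g : UnitQuat, axial (u * g * u⁻¹) = 0 ∧ axial (w * g * w⁻¹) = 0 := by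
  obtain ⟨v, rfl⟩ : ∃ v, w = v * u := ⟨w * u⁻¹, by group⟩
  obtain ⟨b, hb, hvb⟩ := Complex.exists_norm_eq_mul_self (axial v * conj (transverse v))
  have hvb' := congrArg conj hvb
  rw [map_mul, map_mul, Complex.conj_conj, Complex.conj_ofReal] at hvb'
  refine ⟨u⁻¹ * mk 0 b (by simp [hb]) * u, by simp [mul_assoc], ?_⟩
  have : v * u * (u⁻¹ * mk 0 b (by simp [hb]) * u) * (v * u)⁻¹ =
    v * mk 0 b (by simp [hb]) * v⁻¹ := by group
  rw [this]
  simp only [axial_mul, transverse_mul, axial_mk, transverse_mk, axial_inv, transverse_inv,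
    map_neg, map_zero]
  linear_combination hvb' - hvb

end UnitQuat

theorem exists_common_commutatorRoot {T S T' S' : UnitQuat} (h : ⁅T, S⁆ = ⁅T', S'⁆) :
    ∃ g : UnitQuat, 0 ≤ (axial g).re ∧ IsCommutatorRoot g T S ∧ IsCommutatorRoot g T' S' := by
  by_cases hc : ⁅T, S⁆ = 1
  · obtain ⟨u, hT, hS⟩ := UnitQuat.exists_conj_transverse_eq_zero_of_commute
      (commutatorElement_eq_one_iff_commute.1 hc)
    obtain ⟨u', hT', hS'⟩ := UnitQuat.exists_conj_transverse_eq_zero_of_commute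
      (commutatorElement_eq_one_iff_commute.1 (h ▸ hc))
    obtain ⟨g, hg, hg'⟩ := UnitQuat.exists_axial_conj_eq_zero u u'
    refine ⟨g, ?_, .of_axial_conj_eq_zero hg hT hS, .of_axial_conj_eq_zero hg' hT' hS'⟩
    rw [← UnitQuat.re_axial_conj u, hg, Complex.zero_re]
  · obtain ⟨r, g, hr, ha, hb⟩ := UnitQuat.exists_pos_smul_of_ne_zero
      (a := 1 - axial ⁅T, S⁆) (b := 0 - transverse ⁅T, S⁆) (by
        contrapose! hc
        exact UnitQuat.ext (by simpa using (sub_eq_zero.1 hc.1).symm) (by simpa using hc.2))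
    refine ⟨g, ?_, .of_eq_smul ha hb, .of_eq_smul (h ▸ ha) (h ▸ hb)⟩
    rw [ha, Complex.re_ofReal_mul, Complex.sub_re, Complex.one_re]
    exact mul_nonneg hr.le (sub_nonneg.2 (UnitQuat.re_axial_le_one _))

/-! ### Half representations -/

/-- The square root in the closed first quadrant of the point of the upper unit semicircle with
real part `c`. -/
def halfAngle (c : Set.Icc (-1 : ℝ) 1) : Circle :=
  ⟨⟨√((1 + c) / 2), √((1 - c) / 2)⟩, by
    have h1 : 0 ≤ (1 + (c : ℝ)) / 2 := by linarith [c.2.1]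
    have h2 : 0 ≤ (1 - (c : ℝ)) / 2 := by linarith [c.2.2]
    refine mem_sphere_zero_iff_norm.2 ?_
    rw [← sq_eq_sq₀ (norm_nonneg _) zero_le_one,
      ← Complex.normSq_eq_norm_sq, Complex.normSq_mk, Real.mul_self_sqrt h1, Real.mul_self_sqrt h2]
    ring⟩

theorem re_halfAngle_nonneg (c : Set.Icc (-1 : ℝ) 1) : 0 ≤ (halfAngle c : ℂ).re :=
  Real.sqrt_nonneg _

theorem im_halfAngle_nonneg (c : Set.Icc (-1 : ℝ) 1) : 0 ≤ (halfAngle c : ℂ).im :=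
  Real.sqrt_nonneg _

theorem re_halfAngle_sq (c : Set.Icc (-1 : ℝ) 1) : ((halfAngle c : ℂ) ^ 2).re = c := by
  have h1 : 0 ≤ (1 + (c : ℝ)) / 2 := by linarith [c.2.1]
  have h2 : 0 ≤ (1 - (c : ℝ)) / 2 := by linarith [c.2.2]
  simp only [halfAngle, sq, Complex.mul_re]
  rw [Real.mul_self_sqrt h1, Real.mul_self_sqrt h2]
  ring

theorem im_halfAngle_sq_nonneg (c : Set.Icc (-1 : ℝ) 1) : 0 ≤ ((halfAngle c : ℂ) ^ 2).im := by
  have := mul_nonneg (re_halfAngle_nonneg c) (im_halfAngle_nonneg c)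
  simp only [sq, Complex.mul_im]
  linarith

theorem eq_of_re_eq_of_im_nonneg {z w : ℂ} (hz : ‖z‖ = 1) (hw : ‖w‖ = 1) (h : z.re = w.re)
    (hz' : 0 ≤ z.im) (hw' : 0 ≤ w.im) : z = w := by
  have hsq : z.im ^ 2 = w.im ^ 2 := by
    have hn : Complex.normSq z = Complex.normSq w := by
      rw [Complex.normSq_eq_norm_sq, Complex.normSq_eq_norm_sq, hz, hw]
    rw [Complex.normSq_apply, Complex.normSq_apply, h] at hn
    linarith
  exact Complex.ext h ((sq_eq_sq₀ hz' hw').1 hsq)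

theorem exists_circle_sq_eq {z : ℂ} (hz : ‖z‖ = 1) (h : 0 ≤ z.im) :
    ∃ ξ : Circle, (ξ : ℂ) ^ 2 = z ∧ 0 ≤ (ξ : ℂ).re ∧ 0 ≤ (ξ : ℂ).im := by
  have hre : z.re ∈ Set.Icc (-1 : ℝ) 1 := abs_le.1 (hz ▸ Complex.abs_re_le_norm z)
  refine ⟨halfAngle ⟨z.re, hre⟩, eq_of_re_eq_of_im_nonneg (by simp [Circle.norm_coe]) hz
    (re_halfAngle_sq _) (im_halfAngle_sq_nonneg _) h, re_halfAngle_nonneg _, im_halfAngle_nonneg _⟩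

theorem continuous_halfAngle : Continuous halfAngle := by
  refine Continuous.subtype_mk ((Complex.equivRealProdCLM.symm.continuous.comp
    ((?_ : Continuous fun c : Set.Icc (-1 : ℝ) 1 ↦ √((1 + (c : ℝ)) / 2)).prodMk
      (?_ : Continuous fun c : Set.Icc (-1 : ℝ) 1 ↦ √((1 - (c : ℝ)) / 2)))).congr fun c ↦ ?_) _
  · fun_prop
  · fun_prop
  · simp [Complex.ext_iff]

/-- The imaginary unit quaternion `ξ i`, where `ξ ∈ ℝ ⊕ ℝk ≅ ℂ` has norm one: a point of the
equator of the sphere of imaginary units with respect to the poles `±k`. -/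
def equator (ξ : Circle) : UnitQuat := .mk 0 ξ (by simp [Circle.norm_coe])

@[simp]
theorem axial_equator (ξ : Circle) : axial (equator ξ) = 0 := rfl

@[simp]
theorem transverse_equator (ξ : Circle) : transverse (equator ξ) = ξ := rfl

theorem exists_axial_conj_eq_zero_of_re_eq_zero {q : UnitQuat} (hq : (axial q).re = 0) :
    ∃ u : UnitQuat, axial (u * q * u⁻¹) = 0 := by
  obtain ⟨v, hv, -⟩ := UnitQuat.exists_conj_transverse_eq_zero q
  have h2 : √2⁻¹ * √2⁻¹ = (2 : ℝ)⁻¹ := Real.mul_self_sqrt (by norm_num)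
  let w : UnitQuat := .mk √2⁻¹ √2⁻¹ (by
    rw [Complex.norm_of_nonneg (Real.sqrt_nonneg _), sq, h2]
    norm_num)
  refine ⟨w * v, ?_⟩
  have hconj : conj (axial (v * q * v⁻¹)) = -axial (v * q * v⁻¹) :=
    Complex.ext (by simp [hq]) (by simp)
  rw [show w * v * q * (w * v)⁻¹ = w * (v * q * v⁻¹) * w⁻¹ by group]
  generalize v * q * v⁻¹ = t at hv hconj ⊢
  simp [UnitQuat.axial_mul, UnitQuat.transverse_mul, hv, hconj, w]

theorem exists_conj_axial_eq_zero_transverse_mul_eq_zero {X Z : UnitQuat}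
    (hX : (axial X).re = 0) (hZ : (axial Z).re = 0) :
    ∃ u : UnitQuat, axial (u * X * u⁻¹) = 0 ∧ transverse (u * (X * Z) * u⁻¹) = 0 ∧
      (axial (u * (X * Z) * u⁻¹)).im ≤ 0 := by
  obtain ⟨u, hu, him⟩ := UnitQuat.exists_conj_transverse_eq_zero (X * Z)⁻¹
  rw [← conj_inv, UnitQuat.transverse_inv, neg_eq_zero] at hu
  rw [← conj_inv, UnitQuat.axial_inv, Complex.conj_im, neg_nonneg] at him
  by_cases h0 : (axial (u * (X * Z) * u⁻¹)).im = 0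
  · obtain ⟨w, hw⟩ := exists_axial_conj_eq_zero_of_re_eq_zero hX
    refine ⟨w, hw, ?_⟩
    rcases UnitQuat.eq_one_or_eq_neg_one_of_conj hu h0 with h | h <;> simp [h]
  · refine ⟨u, Complex.ext (by simpa using hX) ?_, hu, him⟩
    have hZ' : (axial ((u * X * u⁻¹)⁻¹ * (u * (X * Z) * u⁻¹))).re = 0 := by
      rw [← hZ, ← UnitQuat.re_axial_conj u Z]
      congr 2
      group
    rw [UnitQuat.axial_mul, hu, UnitQuat.axial_inv] at hZ'
    simpa [hX, h0] using hZ'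

theorem exists_conj_eq_equator {X Z : UnitQuat} (hX : axial X = 0) (hXZ : transverse (X * Z) = 0)
    {ξ : Circle} (hξ : (ξ : ℂ) ^ 2 = -axial (X * Z)) :
    ∃ v : UnitQuat, v * X * v⁻¹ = equator ξ ∧ v * Z * v⁻¹ = equator ξ⁻¹ := by
  obtain ⟨v, hv, hv2⟩ := UnitQuat.exists_transverse_eq_zero_sq_eq
    (z := ξ * conj (transverse X)) (by
      rw [norm_mul, Circle.norm_coe, RCLike.norm_conj,
        UnitQuat.norm_transverse_of_axial_eq_zero hX, one_mul])
  have hvX : v * X * v⁻¹ = equator ξ := by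
    ext
    · rw [UnitQuat.axial_conj_of_transverse_eq_zero hv, hX, axial_equator]
    · have hn := X.mul_conj_add
      rw [hX, zero_mul, zero_add] at hn
      rw [UnitQuat.transverse_conj_of_transverse_eq_zero hv, hv2, transverse_equator]
      linear_combination ξ * hn
  refine ⟨v, hvX, ?_⟩
  have hn := UnitQuat.mul_conj_add (equator ξ)
  rw [axial_equator, transverse_equator, zero_mul, zero_add] at hn
  rw [show v * Z * v⁻¹ = (v * X * v⁻¹)⁻¹ * (v * (X * Z) * v⁻¹) by group, hvX]
  ext
  · rw [UnitQuat.axial_mul, UnitQuat.axial_inv, UnitQuat.transverse_conj_of_transverse_eq_zero hv,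
      hXZ]
    simp
  · rw [UnitQuat.transverse_mul, UnitQuat.axial_inv, UnitQuat.transverse_inv,
      UnitQuat.axial_conj_of_transverse_eq_zero hv, ← neg_neg (axial (X * Z)), ← hξ]
    simp only [axial_equator, transverse_equator, map_zero, zero_mul, map_neg, map_pow,
      Circle.coe_inv_eq_conj]
    linear_combination conj (ξ : ℂ) * hn

theorem exists_eq_conj_equator {X Z : UnitQuat} (hX : (axial X).re = 0) (hZ : (axial Z).re = 0) :
    ∃ (y : UnitQuat) (ξ : Circle), 0 ≤ (ξ : ℂ).re ∧ 0 ≤ (ξ : ℂ).im ∧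
      X = y * equator ξ * y⁻¹ ∧ Z = y * equator ξ⁻¹ * y⁻¹ := by
  obtain ⟨u, hu, hXZ, him⟩ := exists_conj_axial_eq_zero_transverse_mul_eq_zero hX hZ
  obtain ⟨ξ, hξ, hre, him'⟩ := exists_circle_sq_eq (z := -axial (u * (X * Z) * u⁻¹))
    (by rw [norm_neg, UnitQuat.norm_axial_of_transverse_eq_zero hXZ]) (by simpa using him)
  rw [← conj_mul] at hXZ hξ
  obtain ⟨v, hvX, hvZ⟩ := exists_conj_eq_equator hu hXZ hξ
  refine ⟨(v * u)⁻¹, ξ, hre, him', ?_, ?_⟩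
  · rw [← hvX]; group
  · rw [← hvZ]; group

/-- The imaginary unit `y⁻¹ k y`: the pole `k` as seen in the frame `y`. -/
def poleDir (y : UnitQuat) : UnitQuat := y⁻¹ * .mk Complex.I 0 (by simp) * y

theorem re_axial_poleDir (y : UnitQuat) : (axial (poleDir y)).re = 0 := by
  rw [poleDir, UnitQuat.re_axial_mul_comm, mul_inv_cancel_left, UnitQuat.axial_mk, Complex.I_re]

theorem normSq_poleDir (y : UnitQuat) :
    (axial (poleDir y)).im ^ 2 + (transverse (poleDir y)).re ^ 2 +
      (transverse (poleDir y)).im ^ 2 = 1 := by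
  have := (poleDir y).norm_sq_add
  rw [← Complex.normSq_eq_norm_sq, ← Complex.normSq_eq_norm_sq, Complex.normSq_apply,
    Complex.normSq_apply, re_axial_poleDir] at this
  linarith

theorem im_axial_conj (y q : UnitQuat) :
    (axial (y * q * y⁻¹)).im = -(axial (poleDir y * q)).re := by
  have h (t : UnitQuat) : (axial t).im = -(axial (.mk Complex.I 0 (by simp) * t)).re := by
    simp [UnitQuat.axial_mul]
  rw [h, poleDir, mul_assoc _ y q, mul_assoc y⁻¹, UnitQuat.re_axial_mul_comm y⁻¹]
  group

theorem axial_conj_equator (y : UnitQuat) (ξ : Circle) :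
    axial (y * equator ξ * y⁻¹) = Complex.I * (transverse (poleDir y) * conj (ξ : ℂ)).re := by
  apply Complex.ext
  · simp
  · rw [im_axial_conj, UnitQuat.axial_mul]
    simp

theorem transverse_conj_equator_mul_conj (y : UnitQuat) (ξ : Circle) :
    transverse (y * equator ξ * y⁻¹) * conj (transverse (y * equator ξ⁻¹ * y⁻¹)) =
      ⟨((ξ : ℂ) ^ 2).re - (transverse (poleDir y) * conj (ξ : ℂ)).re *
        (transverse (poleDir y) * ξ).re, (axial (poleDir y)).im * ((ξ : ℂ) ^ 2).im⟩ := by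
  have hξ : axial (equator ξ * equator ξ⁻¹) = -(ξ : ℂ) ^ 2 ∧
      transverse (equator ξ * equator ξ⁻¹) = 0 := by
    simp [UnitQuat.axial_mul, UnitQuat.transverse_mul, sq, Circle.coe_inv_eq_conj, -Circle.coe_inv]
  have key := UnitQuat.axial_mul (y * equator ξ * y⁻¹) (y * equator ξ⁻¹ * y⁻¹)
  rw [axial_conj_equator, axial_conj_equator, Circle.coe_inv_eq_conj, Complex.conj_conj,
    conj_mul, Complex.ext_iff, UnitQuat.re_axial_conj, im_axial_conj,
    UnitQuat.axial_mul (poleDir y), hξ.1, hξ.2] at key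
  obtain ⟨hre, him⟩ := key
  simp only [re_axial_poleDir, Complex.neg_re, Complex.neg_im, Complex.sub_re, Complex.sub_im,
    map_zero, mul_zero, sub_zero, Complex.mul_re Complex.I, Complex.mul_im Complex.I, Complex.I_re,
    Complex.I_im, Complex.ofReal_re, Complex.ofReal_im, Complex.mul_re (axial _),
    Complex.mul_re (_ * _ : ℂ) (_ * _ : ℂ), Complex.mul_im (_ * _ : ℂ) (_ * _ : ℂ)] at hre him
  apply Complex.ext
  · linear_combination hre
  · linear_combination him

theorem axial_inv_mul_mul_inv_mul {e : UnitQuat} (he : transverse e = 0) (p q : UnitQuat) :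
    axial (e⁻¹ * p * e⁻¹ * q) =
      conj (axial e ^ 2) * (axial p * axial q) - transverse p * conj (transverse q) := by
  simp only [UnitQuat.axial_mul, UnitQuat.transverse_mul, UnitQuat.axial_inv,
    UnitQuat.transverse_inv, he, Complex.conj_conj, map_pow, map_zero, neg_zero]
  linear_combination (-transverse p * conj (transverse q)) *
    UnitQuat.axial_mul_conj_of_transverse_eq_zero he

theorem re_axial_inv_mul_conj_equator {e : UnitQuat} (he : transverse e = 0) (y : UnitQuat)
    (ξ : Circle) :
    (axial (e⁻¹ * (y * equator ξ * y⁻¹) * e⁻¹ * (y * equator ξ⁻¹ * y⁻¹))).re =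
      (1 - (axial e ^ 2).re) * ((transverse (poleDir y) * conj (ξ : ℂ)).re *
        (transverse (poleDir y) * ξ).re) - ((ξ : ℂ) ^ 2).re := by
  rw [axial_inv_mul_mul_inv_mul he, transverse_conj_equator_mul_conj, axial_conj_equator,
    axial_conj_equator, Circle.coe_inv_eq_conj, Complex.conj_conj]
  generalize axial e ^ 2 = w
  simp only [Complex.sub_re, Complex.mul_re (conj w), Complex.conj_re, Complex.conj_im,
    Complex.mul_re (_ * _ : ℂ) (_ * _ : ℂ), Complex.mul_im (_ * _ : ℂ) (_ * _ : ℂ),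
    Complex.mul_re Complex.I, Complex.mul_im Complex.I, Complex.I_re,
    Complex.I_im, Complex.ofReal_re, Complex.ofReal_im]
  ring

theorem isCommutatorRoot_conj_equator_iff {e : UnitQuat} (he : transverse e = 0) (y : UnitQuat)
    (ξ : Circle) :
    IsCommutatorRoot (e ^ 2) (e * (y * equator ξ⁻¹ * y⁻¹) * e)
        ((e ^ 2)⁻¹ * (y * equator ξ * y⁻¹)) ↔
      ((ξ : ℂ) ^ 2).re = (1 - (axial e ^ 2).re) *
        ((transverse (poleDir y) * conj (ξ : ℂ)).re * (transverse (poleDir y) * ξ).re) := by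
  have hmid := re_axial_inv_mul_conj_equator he y ξ
  have hX : (axial (y * equator ξ * y⁻¹)).re = 0 := by simp
  have hZ : (axial (y * equator ξ⁻¹ * y⁻¹)).re = 0 := by simp
  generalize y * equator ξ * y⁻¹ = X at *
  generalize y * equator ξ⁻¹ * y⁻¹ = Z at *
  have left : (axial ((e ^ 2)⁻¹ * (e * Z * e))).re = 0 := by
    rw [UnitQuat.re_axial_mul_comm, show e * Z * e * (e ^ 2)⁻¹ = e * Z * e⁻¹ by group,
      UnitQuat.re_axial_conj, hZ]
  have right : (axial (e ^ 2 * ((e ^ 2)⁻¹ * X))).re = 0 := by rw [mul_inv_cancel_left, hX]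
  have mid : (axial ((e ^ 2)⁻¹ * X * (e ^ 2)⁻¹ * (e * Z * e))).re =
      (axial (e⁻¹ * X * e⁻¹ * Z)).re := by
    rw [show (e ^ 2)⁻¹ * X * (e ^ 2)⁻¹ * (e * Z * e) =
      e⁻¹ * (e⁻¹ * X * e⁻¹ * Z) * e⁻¹⁻¹ by group, UnitQuat.re_axial_conj]
  refine ⟨fun h ↦ ?_, fun h ↦ ⟨left, right, ?_⟩⟩
  · have := h.re_mid
    rw [mid, hmid] at this
    linarith
  · rw [mid, hmid, h, sub_self]

theorem norm_transverse_sq_le_one (q : UnitQuat) : ‖transverse q‖ ^ 2 ≤ 1 := by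
  linarith [q.norm_sq_add, sq_nonneg ‖axial q‖]

theorem one_sub_mul_norm_transverse_sq_le_one (D : unitInterval) (q : UnitQuat) :
    (1 - (D : ℝ)) * ‖transverse q‖ ^ 2 ≤ 1 :=
  mul_le_one₀ (by linarith [D.2.1]) (sq_nonneg _) (norm_transverse_sq_le_one q)

/-- The phase of the equatorial points entering `halfRep D y`: with `τ = transverse (poleDir y)`,
the only `ξ` in the closed first quadrant with `Re ξ² = (1 - D) Re (τ conj ξ) Re (τ ξ)`, see
`phase_balance_iff` and `eq_of_re_sq_eq`. -/
def phase (D : unitInterval) (y : UnitQuat) : Circle :=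
  halfAngle ⟨(1 - D) * (transverse (poleDir y) ^ 2).re /
    (2 - (1 - D) * ‖transverse (poleDir y)‖ ^ 2), by
      have hle := one_sub_mul_norm_transverse_sq_le_one D (poleDir y)
      have hre : |(transverse (poleDir y) ^ 2).re| ≤ ‖transverse (poleDir y)‖ ^ 2 := by
        rw [← norm_pow]
        exact Complex.abs_re_le_norm _
      have hD : 0 ≤ 1 - (D : ℝ) := sub_nonneg.2 D.2.2
      obtain ⟨hl, hr⟩ := abs_le.1 hre
      have hl' := mul_le_mul_of_nonneg_left hl hD
      have hr' := mul_le_mul_of_nonneg_left hr hD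
      exact ⟨by rw [le_div_iff₀] <;> linarith, by rw [div_le_iff₀] <;> linarith⟩⟩

theorem re_mul_conj_mul_re_mul (z : ℂ) (ξ : Circle) :
    (z * conj (ξ : ℂ)).re * (z * ξ).re = ((z ^ 2).re + ((ξ : ℂ) ^ 2).re * ‖z‖ ^ 2) / 2 := by
  have hξ := Circle.normSq_coe ξ
  rw [Complex.normSq_apply] at hξ
  rw [← Complex.normSq_eq_norm_sq, Complex.normSq_apply]
  simp only [sq, Complex.mul_re, Complex.conj_re, Complex.conj_im]
  linear_combination ((z.re * z.re - z.im * z.im) / 2) * hξ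

theorem phase_balance_iff (D : unitInterval) (y : UnitQuat) (ξ : Circle) :
    ((ξ : ℂ) ^ 2).re = (1 - D) *
        ((transverse (poleDir y) * conj (ξ : ℂ)).re * (transverse (poleDir y) * ξ).re) ↔
      ((ξ : ℂ) ^ 2).re = ((phase D y : ℂ) ^ 2).re := by
  have hle := one_sub_mul_norm_transverse_sq_le_one D (poleDir y)
  rw [phase, re_halfAngle_sq, eq_div_iff (by linarith), re_mul_conj_mul_re_mul]
  constructor <;> intro h <;> linarith

theorem re_phase_sq (D : unitInterval) (y : UnitQuat) :
    ((phase D y : ℂ) ^ 2).re = (1 - D) * ((transverse (poleDir y) * conj (phase D y : ℂ)).re *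
      (transverse (poleDir y) * phase D y).re) :=
  (phase_balance_iff D y _).2 rfl

theorem eq_of_re_sq_eq {ξ ζ : Circle} (h : ((ξ : ℂ) ^ 2).re = ((ζ : ℂ) ^ 2).re)
    (hξ : 0 ≤ (ξ : ℂ).re) (hξ' : 0 ≤ (ξ : ℂ).im) (hζ : 0 ≤ (ζ : ℂ).re) (hζ' : 0 ≤ (ζ : ℂ).im) :
    ξ = ζ := by
  have hre (ξ : Circle) : (ξ : ℂ).re ^ 2 = (1 + ((ξ : ℂ) ^ 2).re) / 2 := by
    have := Circle.normSq_coe ξ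
    rw [Complex.normSq_apply] at this
    rw [sq (ξ : ℂ), Complex.mul_re]
    linarith
  refine Circle.ext (eq_of_re_eq_of_im_nonneg ξ.norm_coe ζ.norm_coe ?_ hξ' hζ')
  rw [← sq_eq_sq₀ hξ hζ, hre, hre, h]

/-- The element `e` of the circle `{transverse = 0}` for which `axial e ^ 2` has real part `D`; the
commutator of `halfRep D y` is `-e ^ 4`. -/
def twist (D : unitInterval) : UnitQuat :=
  .mk (halfAngle (Set.inclusion (Set.Icc_subset_Icc_left (by norm_num)) D)) 0
    (by simp [Circle.norm_coe])

theorem transverse_twist (D : unitInterval) : transverse (twist D) = 0 := rfl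

theorem re_axial_twist_sq (D : unitInterval) : (axial (twist D) ^ 2).re = D := re_halfAngle_sq _

theorem im_axial_twist_sq_nonneg (D : unitInterval) : 0 ≤ (axial (twist D) ^ 2).im :=
  im_halfAngle_sq_nonneg _

/-- The images of two free generators under a representation of the fundamental group of the
punctured torus with boundary holonomy `-twist D ^ 4`. The representations with commutator root
`twist D ^ 2` are parametrised in this way by the frame `y`. -/
def halfRep (D : unitInterval) (y : UnitQuat) : UnitQuat × UnitQuat :=
  (twist D * (y * equator (phase D y)⁻¹ * y⁻¹) * twist D,
    (twist D ^ 2)⁻¹ * (y * equator (phase D y) * y⁻¹))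

theorem isCommutatorRoot_halfRep (D : unitInterval) (y : UnitQuat) :
    IsCommutatorRoot (twist D ^ 2) (halfRep D y).1 (halfRep D y).2 := by
  rw [halfRep, isCommutatorRoot_conj_equator_iff (transverse_twist D), re_axial_twist_sq]
  exact re_phase_sq D y

theorem IsCommutatorRoot.exists_eq_halfRep {D : unitInterval} {T S : UnitQuat}
    (h : IsCommutatorRoot (twist D ^ 2) T S) : ∃ y, (T, S) = halfRep D y := by
  obtain ⟨y, ξ, hre, him, hX, hZ⟩ := exists_eq_conj_equator (X := twist D ^ 2 * S)
    (Z := (twist D)⁻¹ * T * (twist D)⁻¹) h.re_right (by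
      rw [UnitQuat.re_axial_mul_comm, ← mul_assoc, ← sq, inv_pow]
      exact h.re_left)
  obtain rfl : T = twist D * (y * equator ξ⁻¹ * y⁻¹) * twist D := by rw [← hZ]; group
  obtain rfl : S = (twist D ^ 2)⁻¹ * (y * equator ξ * y⁻¹) := eq_inv_mul_of_mul_eq hX
  rw [isCommutatorRoot_conj_equator_iff (transverse_twist D), re_axial_twist_sq,
    phase_balance_iff] at h
  obtain rfl : ξ = phase D y :=
    eq_of_re_sq_eq h hre him (re_halfAngle_nonneg _) (im_halfAngle_nonneg _)
  exact ⟨y, rfl⟩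

theorem commute_of_transverse_eq_zero {u v : UnitQuat} (hu : transverse u = 0)
    (hv : transverse v = 0) : Commute u v := by
  ext <;> simp [UnitQuat.axial_mul, UnitQuat.transverse_mul, hu, hv, mul_comm]

theorem poleDir_eq_iff {y y' : UnitQuat} :
    poleDir y' = poleDir y ↔ transverse (y' * y⁻¹) = 0 := by
  have h : poleDir y' = poleDir y ↔ Commute (.mk Complex.I 0 (by simp)) (y' * y⁻¹) := by
    unfold poleDir Commute SemiconjBy
    generalize UnitQuat.mk _ _ _ = k
    rw [mul_assoc, inv_mul_eq_iff_eq_mul, ← mul_assoc y', ← mul_inv_eq_iff_eq_mul]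
    simp only [mul_assoc]
  rw [h]
  exact ⟨UnitQuat.transverse_eq_zero_of_commute (by simp) (by simp),
    commute_of_transverse_eq_zero (by simp)⟩

theorem poleDir_mul {u : UnitQuat} (hu : transverse u = 0) (y : UnitQuat) :
    poleDir (u * y) = poleDir y := by
  rwa [poleDir_eq_iff, mul_inv_cancel_right]

theorem halfRep_mul {u : UnitQuat} (hu : transverse u = 0) (D : unitInterval) (y : UnitQuat) :
    halfRep D (u * y) = toConjAct u • halfRep D y := by
  have ht : toConjAct u • twist D = twist D :=
    (commute_of_transverse_eq_zero hu (transverse_twist D)).mul_inv_cancel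
  have hphase : phase D (u * y) = phase D y := by simp only [phase, poleDir_mul hu]
  simp only [halfRep, hphase, Prod.smul_mk, smul_mul', smul_inv', smul_pow', ht]
  simp only [ConjAct.toConjAct_smul, mul_inv_rev, inv_inv, mul_assoc,
    inv_mul_cancel_left]

section trace

variable (D : unitInterval) (y : UnitQuat)

theorem axial_halfRep_fst : axial (halfRep D y).1 =
    axial (twist D) ^ 2 * (Complex.I * (transverse (poleDir y) * phase D y).re) := by
  have h := axial_conj_equator y (phase D y)⁻¹
  rw [Circle.coe_inv_eq_conj, Complex.conj_conj] at h
  rw [halfRep, UnitQuat.axial_mul, UnitQuat.axial_mul, transverse_twist, h]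
  simp only [map_zero]
  ring

theorem transverse_halfRep_fst : transverse (halfRep D y).1 =
    transverse (y * equator (phase D y)⁻¹ * y⁻¹) := by
  rw [halfRep, UnitQuat.transverse_mul, UnitQuat.transverse_mul, transverse_twist]
  linear_combination transverse (y * equator (phase D y)⁻¹ * y⁻¹) *
    UnitQuat.axial_mul_conj_of_transverse_eq_zero (transverse_twist D)

theorem axial_halfRep_snd : axial (halfRep D y).2 =
    conj (axial (twist D) ^ 2) *
      (Complex.I * (transverse (poleDir y) * conj (phase D y : ℂ)).re) := by
  rw [halfRep, UnitQuat.axial_mul, axial_conj_equator]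
  simp [sq, UnitQuat.axial_mul, UnitQuat.transverse_mul, transverse_twist]

theorem transverse_halfRep_snd : transverse (halfRep D y).2 =
    conj (axial (twist D) ^ 2) * transverse (y * equator (phase D y) * y⁻¹) := by
  rw [halfRep, UnitQuat.transverse_mul]
  simp [sq, UnitQuat.axial_mul, UnitQuat.transverse_mul, transverse_twist]

theorem re_axial_halfRep_fst : (axial (halfRep D y).1).re =
    -((axial (twist D) ^ 2).im * (transverse (poleDir y) * phase D y).re) := by
  rw [axial_halfRep_fst, Complex.mul_re, Complex.I_mul_re, Complex.I_mul_im, Complex.ofReal_re,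
    Complex.ofReal_im]
  ring

theorem re_axial_halfRep_snd : (axial (halfRep D y).2).re =
    (axial (twist D) ^ 2).im * (transverse (poleDir y) * conj (phase D y : ℂ)).re := by
  rw [axial_halfRep_snd, Complex.mul_re, Complex.I_mul_re, Complex.I_mul_im, Complex.ofReal_re,
    Complex.ofReal_im, Complex.conj_im]
  ring

theorem im_axial_twist_sq_sq : (axial (twist D) ^ 2).im ^ 2 = 1 - (D : ℝ) ^ 2 := by
  have h2 : Complex.normSq (axial (twist D) ^ 2) = 1 := by
    rw [map_pow, Complex.normSq_eq_norm_sq, UnitQuat.norm_axial_of_transverse_eq_zero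
      (transverse_twist D), one_pow, one_pow]
  rw [Complex.normSq_apply, re_axial_twist_sq] at h2
  linarith

theorem re_axial_halfRep_mul : (axial ((halfRep D y).2 * (halfRep D y).1)).re =
    -((axial (twist D) ^ 2).im ^ 2 * ((transverse (poleDir y) * conj (phase D y : ℂ)).re *
        (transverse (poleDir y) * phase D y).re) +
      (axial (twist D) ^ 2).im * ((axial (poleDir y)).im * ((phase D y : ℂ) ^ 2).im)) := by
  have hP := transverse_conj_equator_mul_conj y (phase D y)
  have hw : axial (twist D) ^ 2 * conj (axial (twist D) ^ 2) = 1 := by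
    rw [map_pow, ← mul_pow, UnitQuat.axial_mul_conj_of_transverse_eq_zero (transverse_twist D),
      one_pow]
  have h : axial ((halfRep D y).2 * (halfRep D y).1) =
      -((transverse (poleDir y) * conj (phase D y : ℂ)).re *
        (transverse (poleDir y) * phase D y).re : ℝ) -
      conj (axial (twist D) ^ 2) * (transverse (y * equator (phase D y) * y⁻¹) *
        conj (transverse (y * equator (phase D y)⁻¹ * y⁻¹))) := by
    rw [UnitQuat.axial_mul, axial_halfRep_fst, axial_halfRep_snd, transverse_halfRep_fst,
      transverse_halfRep_snd]
    push_cast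
    linear_combination (Complex.I ^ 2 * (transverse (poleDir y) * conj (phase D y : ℂ)).re *
      (transverse (poleDir y) * phase D y).re) * hw +
      ((transverse (poleDir y) * conj (phase D y : ℂ)).re *
        (transverse (poleDir y) * phase D y).re) * Complex.I_sq
  rw [h, hP, Complex.sub_re, Complex.neg_re, Complex.ofReal_re, Complex.mul_re (conj _),
    Complex.conj_re (axial _ ^ 2), Complex.conj_im (axial _ ^ 2), re_axial_twist_sq,
    im_axial_twist_sq_sq, re_phase_sq]
  ring

end trace

theorem im_axial_twist_sq_pos {D : unitInterval} (hD : D < 1) : 0 < (axial (twist D) ^ 2).im := by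
  refine (im_axial_twist_sq_nonneg D).lt_of_ne' fun h ↦ ?_
  have h1 := im_axial_twist_sq_sq D
  rw [h] at h1
  have hD' : (D : ℝ) < 1 := hD
  nlinarith [D.2.1]

theorem re_axial_commutator_halfRep (D : unitInterval) (y : UnitQuat) :
    (axial ⁅(halfRep D y).1, (halfRep D y).2⁆).re = 1 - 2 * (D : ℝ) ^ 2 := by
  rw [(isCommutatorRoot_halfRep D y).commutator_eq, UnitQuat.axial_neg, Complex.neg_re]
  rw [← pow_mul, UnitQuat.axial_pow_of_transverse_eq_zero (transverse_twist D), pow_mul,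
    sq (_ ^ 2), Complex.mul_re, ← sq, ← sq, im_axial_twist_sq_sq, re_axial_twist_sq]
  ring

theorem not_commute_halfRep {D : unitInterval} (hD : 0 < D) (y : UnitQuat) :
    ¬ Commute (halfRep D y).1 (halfRep D y).2 := by
  intro h
  have hre := re_axial_commutator_halfRep D y
  rw [commutatorElement_eq_one_iff_commute.2 h, UnitQuat.axial_one, Complex.one_re] at hre
  have hD' : (0 : ℝ) < D := hD
  nlinarith

theorem eq_of_smul_halfRep_eq {D D' : unitInterval} {y y' w : UnitQuat}
    (h : toConjAct w • halfRep D y = halfRep D' y') : D = D' := by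
  have hre := re_axial_commutator_halfRep D' y'
  rw [← h, Prod.smul_fst, Prod.smul_snd, commutatorElement_def, ← smul_inv', ← smul_inv',
    ← smul_mul', ← smul_mul', ← smul_mul', ← commutatorElement_def, ConjAct.toConjAct_smul,
    UnitQuat.re_axial_conj, re_axial_commutator_halfRep] at hre
  exact Subtype.ext ((sq_eq_sq₀ D.2.1 D'.2.1).1 (by linarith))

/- If `A = 0` or `B = 0`, the balance condition puts the point at `y² = 1` or at `x² = 1`. -/
theorem sphere_point_unique {A B x y z x' y' z' d : ℝ} (hd : d ∈ Set.Icc (0 : ℝ) 1)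
    (hAB : A ^ 2 + B ^ 2 = 1) (hbal : A ^ 2 - B ^ 2 = d * ((A * x) ^ 2 - (B * y) ^ 2))
    (hn : z ^ 2 + x ^ 2 + y ^ 2 = 1) (hn' : z' ^ 2 + x' ^ 2 + y' ^ 2 = 1)
    (hx : A * x' = A * x) (hy : B * y' = B * y) (hz : z' * (A * B) = z * (A * B)) :
    x' = x ∧ y' = y ∧ z' = z := by
  rcases eq_or_ne A 0 with rfl | hA
  · have hB : B ≠ 0 := by rintro rfl; norm_num at hAB
    obtain rfl : y' = y := mul_left_cancel₀ hB hy
    have hy1 : 1 ≤ y' ^ 2 := by nlinarith [mul_le_of_le_one_left (sq_nonneg y') hd.2]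
    have h0 {a b : ℝ} (h : a ^ 2 + b ^ 2 + y' ^ 2 = 1) : a = 0 ∧ b = 0 :=
      ⟨by nlinarith, by nlinarith⟩
    simp [h0 hn, h0 hn']
  · obtain rfl : x' = x := mul_left_cancel₀ hA hx
    rcases eq_or_ne B 0 with rfl | hB
    · have hx1 : 1 ≤ x' ^ 2 := by nlinarith [mul_le_of_le_one_left (sq_nonneg x') hd.2]
      have h0 {a b : ℝ} (h : a ^ 2 + x' ^ 2 + b ^ 2 = 1) : a = 0 ∧ b = 0 :=
        ⟨by nlinarith, by nlinarith⟩
      simp [h0 hn, h0 hn']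
    · exact ⟨rfl, mul_left_cancel₀ hB hy, mul_right_cancel₀ (mul_ne_zero hA hB) hz⟩

theorem poleDir_eq_of_arms_eq {D : unitInterval} {y y' : UnitQuat}
    (hp : (transverse (poleDir y') * conj (phase D y' : ℂ)).re =
      (transverse (poleDir y) * conj (phase D y : ℂ)).re)
    (hq : (transverse (poleDir y') * phase D y').re = (transverse (poleDir y) * phase D y).re)
    (hz : (axial (poleDir y')).im * ((phase D y' : ℂ) ^ 2).im =
      (axial (poleDir y)).im * ((phase D y : ℂ) ^ 2).im) : poleDir y' = poleDir y := by
  have hphase : phase D y' = phase D y :=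
    eq_of_re_sq_eq (by rw [re_phase_sq, re_phase_sq, hp, hq]) (re_halfAngle_nonneg _)
      (im_halfAngle_nonneg _) (re_halfAngle_nonneg _) (im_halfAngle_nonneg _)
  rw [hphase] at hp hq hz
  have hbal := re_phase_sq D y
  have hnorm := Circle.normSq_coe (phase D y)
  simp only [Complex.normSq_apply, sq, Complex.mul_re, Complex.mul_im, Complex.conj_re,
    Complex.conj_im] at hp hq hz hbal hnorm
  obtain ⟨hx, hy, hz⟩ := sphere_point_unique (A := (phase D y : ℂ).re) (B := (phase D y : ℂ).im)
    (d := 1 - D) ⟨by linarith [D.2.2], by linarith [D.2.1]⟩ (by linarith) (by linarith)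
    (normSq_poleDir y) (normSq_poleDir y') (by linarith) (by linarith) (by linarith)
  exact UnitQuat.ext (Complex.ext (by simp only [re_axial_poleDir]) hz) (Complex.ext hx hy)

theorem exists_mul_eq_of_smul_halfRep_eq {D : unitInterval} (hD : D < 1) {y y' w : UnitQuat}
    (h : toConjAct w • halfRep D y = halfRep D y') :
    ∃ u, transverse u = 0 ∧ y' = u * y := by
  have hs := (im_axial_twist_sq_pos hD).ne'
  have hT := re_axial_halfRep_fst D y'
  have hS := re_axial_halfRep_snd D y'
  have hST := re_axial_halfRep_mul D y'
  rw [← h, Prod.smul_fst, ConjAct.toConjAct_smul, UnitQuat.re_axial_conj, re_axial_halfRep_fst,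
    neg_inj, mul_right_inj' hs] at hT
  rw [← h, Prod.smul_snd, ConjAct.toConjAct_smul, UnitQuat.re_axial_conj, re_axial_halfRep_snd,
    mul_right_inj' hs] at hS
  rw [← h, Prod.smul_fst, Prod.smul_snd, ← smul_mul', ConjAct.toConjAct_smul,
    UnitQuat.re_axial_conj, re_axial_halfRep_mul, hS, hT, neg_inj, add_right_inj,
    mul_right_inj' hs] at hST
  exact ⟨y' * y⁻¹, poleDir_eq_iff.1 (poleDir_eq_of_arms_eq hS.symm hT.symm hST.symm), by group⟩

theorem twist_one : twist 1 = 1 := by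
  refine UnitQuat.ext (Complex.ext ?_ ?_) ?_ <;> simp [twist, halfAngle]

theorem halfRep_one (y : UnitQuat) : halfRep 1 y = toConjAct y • halfRep 1 1 := by
  have hphase : phase 1 y = phase 1 1 := by simp [phase]
  simp [halfRep, hphase, twist_one, ConjAct.toConjAct_smul]

theorem exists_smul_eq_halfRep {T S T' S' : UnitQuat} (h : ⁅T, S⁆ = ⁅T', S'⁆) :
    ∃ (D : unitInterval) (y y' u : UnitQuat),
      toConjAct u • (T, S) = halfRep D y ∧ toConjAct u • (T', S') = halfRep D y' := by
  obtain ⟨g, hg, hroot, hroot'⟩ := exists_common_commutatorRoot h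
  obtain ⟨u, hu, him⟩ := UnitQuat.exists_conj_transverse_eq_zero g
  let D : unitInterval := ⟨(axial g).re, hg, g.re_axial_le_one⟩
  have hgD : u * g * u⁻¹ = twist D ^ 2 := by
    ext
    · rw [UnitQuat.axial_pow_of_transverse_eq_zero (transverse_twist D)]
      refine eq_of_re_eq_of_im_nonneg (UnitQuat.norm_axial_of_transverse_eq_zero hu) ?_ ?_ him
        (im_axial_twist_sq_nonneg D)
      · rw [norm_pow, UnitQuat.norm_axial_of_transverse_eq_zero (transverse_twist D), one_pow]
      · rw [UnitQuat.re_axial_conj, re_axial_twist_sq]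
    · rw [hu, UnitQuat.transverse_pow_of_transverse_eq_zero (transverse_twist D)]
  obtain ⟨y, hy⟩ := (hgD ▸ hroot.map_conj u).exists_eq_halfRep
  obtain ⟨y', hy'⟩ := (hgD ▸ hroot'.map_conj u).exists_eq_halfRep
  exact ⟨D, y, y', u, hy, hy'⟩

/-- `q = t + v i` with `t` real and `v` a real multiple of a square root of `ρ`, so that the
vector part of `q` lies on a line in the plane of `i` and `j` which depends only on `ρ`; if `ρ` is
zero, so is `v`. -/
structure IsAligned (ρ : ℂ) (q : UnitQuat) : Prop where
  im_axial : (axial q).im = 0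
  mul_conj_transverse : ρ * conj (transverse q) = ‖ρ‖ * transverse q
  transverse_eq_zero : ρ = 0 → transverse q = 0

namespace IsAligned

variable {ρ : ℂ} {q u w : UnitQuat}

theorem conj_axial (h : IsAligned ρ q) : conj (axial q) = axial q :=
  Complex.conj_eq_iff_im.2 h.im_axial

theorem conj_eq_conj_of_axial_eq_zero (h : IsAligned ρ q) (hu : transverse u = 0)
    (hw : axial w = 0) (hw' : transverse w ^ 2 * ‖ρ‖ = axial u ^ 2 * ρ) :
    w * q * w⁻¹ = u * q * u⁻¹ := by
  have hnorm : transverse w * conj (transverse w) = 1 := by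
    simpa [hw] using w.mul_conj_add
  have hv : transverse w ^ 2 * conj (transverse q) = axial u ^ 2 * transverse q := by
    rcases eq_or_ne ρ 0 with h0 | h0
    · simp [h.transverse_eq_zero h0]
    · have hρ : (‖ρ‖ : ℂ) ≠ 0 := by simpa using h0
      refine mul_left_cancel₀ hρ ?_
      linear_combination axial u ^ 2 * h.mul_conj_transverse + conj (transverse q) * hw'
  ext
  · rw [UnitQuat.axial_conj_of_transverse_eq_zero hu]
    simp only [UnitQuat.axial_mul, UnitQuat.transverse_mul, UnitQuat.axial_inv,
      UnitQuat.transverse_inv, hw, h.conj_axial, map_zero, map_neg]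
    linear_combination axial q * hnorm
  · rw [UnitQuat.transverse_conj_of_transverse_eq_zero hu]
    simp only [UnitQuat.axial_mul, UnitQuat.transverse_mul, UnitQuat.axial_inv,
      UnitQuat.transverse_inv, hw, h.conj_axial, map_zero]
    linear_combination hv

theorem axial_of_conj_eq_conj (h : IsAligned ρ q) (hu : transverse u = 0) (hq : transverse q ≠ 0)
    (hc : w * q * w⁻¹ = u * q * u⁻¹) :
    axial u ^ 2 * conj (axial w) = axial w ∧
      (axial w = 0 → transverse w ^ 2 * ‖ρ‖ = axial u ^ 2 * ρ) := by
  have ha := congrArg axial hc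
  have hb := congrArg transverse hc
  rw [UnitQuat.axial_conj_of_transverse_eq_zero hu] at ha
  rw [UnitQuat.transverse_conj_of_transverse_eq_zero hu] at hb
  simp only [UnitQuat.axial_mul, UnitQuat.transverse_mul, UnitQuat.axial_inv,
    UnitQuat.transverse_inv, h.conj_axial, Complex.conj_conj, map_neg] at ha hb
  have hw := w.mul_conj_add
  refine ⟨mul_right_cancel₀ hq ?_, fun h0 ↦ mul_right_cancel₀ ((map_ne_zero conj).2 hq) ?_⟩
  · linear_combination -conj (axial w) * hb - transverse w * ha +
      (axial w * transverse q + transverse w * axial q) * hw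
  · rw [h0] at hb
    linear_combination -axial u ^ 2 * h.mul_conj_transverse + ‖ρ‖ * hb

end IsAligned

section axis

theorem mul_conj_eq_norm_mul_of_mul_conj_eq {v w : ℂ} (h : w * conj v = v * conj w) :
    (v ^ 2 + w ^ 2) * conj v = ‖v ^ 2 + w ^ 2‖ * v ∧
      (v ^ 2 + w ^ 2) * conj w = ‖v ^ 2 + w ^ 2‖ * w ∧
      (v ^ 2 + w ^ 2 = 0 → v = 0 ∧ w = 0) := by
  have hv := Complex.mul_conj' v
  have hw := Complex.mul_conj' w
  have hnorm : ‖v ^ 2 + w ^ 2‖ = ‖v‖ ^ 2 + ‖w‖ ^ 2 := by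
    rw [← sq_eq_sq₀ (norm_nonneg _) (by positivity)]
    have h2 := Complex.mul_conj' (v ^ 2 + w ^ 2)
    have : ((‖v ^ 2 + w ^ 2‖ ^ 2 : ℝ) : ℂ) = ((‖v‖ ^ 2 + ‖w‖ ^ 2) ^ 2 : ℝ) := by
      push_cast
      rw [← h2, ← hv, ← hw, map_add, map_pow, map_pow]
      linear_combination (w * conj v - v * conj w) * h
    exact_mod_cast this
  refine ⟨?_, ?_, fun h0 ↦ ?_⟩
  · rw [hnorm]
    push_cast
    rw [← hv, ← hw]
    linear_combination w * h
  · rw [hnorm]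
    push_cast
    rw [← hv, ← hw]
    linear_combination -v * h
  · rw [h0, norm_zero, eq_comm, add_eq_zero_iff_of_nonneg (by positivity) (by positivity)] at hnorm
    simpa using hnorm

variable (y : UnitQuat)

/-- The square of a complex number on the line through the transverse parts of both entries of
`halfRep 0 y`; it vanishes only if both of these parts do. -/
def axisSq : ℂ := (transverse (halfRep 0 y).1 ^ 2 + transverse (halfRep 0 y).2 ^ 2) / 4

theorem axial_twist_zero_sq : axial (twist 0) ^ 2 = Complex.I := by
  refine eq_of_re_eq_of_im_nonneg ?_ Complex.norm_I ?_ (im_axial_twist_sq_nonneg 0) (by simp)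
  · rw [norm_pow, UnitQuat.norm_axial_of_transverse_eq_zero (transverse_twist 0), one_pow]
  · rw [re_axial_twist_sq]; simp

theorem im_axial_halfRep_zero :
    (axial (halfRep 0 y).1).im = 0 ∧ (axial (halfRep 0 y).2).im = 0 := by
  rw [axial_halfRep_fst, axial_halfRep_snd, axial_twist_zero_sq]
  simp [Complex.mul_im]

theorem transverse_halfRep_zero_parallel :
    transverse (halfRep 0 y).2 * conj (transverse (halfRep 0 y).1) =
      transverse (halfRep 0 y).1 * conj (transverse (halfRep 0 y).2) := by
  have hre := re_phase_sq 0 y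
  rw [Set.Icc.coe_zero, sub_zero, one_mul] at hre
  have h := transverse_conj_equator_mul_conj y (phase 0 y)
  rw [hre, sub_self] at h
  rw [transverse_halfRep_fst, transverse_halfRep_snd, axial_twist_zero_sq, Complex.conj_I,
    mul_assoc, h, map_mul, map_neg, Complex.conj_I, neg_neg]
  have h' := congrArg conj h
  rw [map_mul, Complex.conj_conj] at h'
  rw [mul_left_comm, mul_comm (transverse (_ * _)) (conj _), h']
  apply Complex.ext <;> simp

theorem isAligned_halfRep_zero :
    IsAligned (axisSq y) (halfRep 0 y).1 ∧ IsAligned (axisSq y) (halfRep 0 y).2 := by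
  obtain ⟨h1, h2, h0⟩ := mul_conj_eq_norm_mul_of_mul_conj_eq (transverse_halfRep_zero_parallel y)
  have hnorm : (‖axisSq y‖ : ℂ) =
      ‖transverse (halfRep 0 y).1 ^ 2 + transverse (halfRep 0 y).2 ^ 2‖ / 4 := by
    simp [axisSq]
  have hzero (h : axisSq y = 0) := h0 ((div_eq_zero_iff.1 h).resolve_right (by norm_num))
  refine ⟨⟨(im_axial_halfRep_zero y).1, ?_, fun h ↦ (hzero h).1⟩,
    ⟨(im_axial_halfRep_zero y).2, ?_, fun h ↦ (hzero h).2⟩⟩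
  · rw [hnorm, axisSq]
    linear_combination h1 / 4
  · rw [hnorm, axisSq]
    linear_combination h2 / 4

theorem transverse_ne_zero_of_axisSq_ne_zero (h : axisSq y ≠ 0) :
    transverse (halfRep 0 y).1 ≠ 0 ∨ transverse (halfRep 0 y).2 ≠ 0 := by
  contrapose! h
  simp [axisSq, h.1, h.2]

theorem norm_axisSq_le : ‖axisSq y‖ ≤ 1 / 2 := by
  have h1 := norm_transverse_sq_le_one (halfRep 0 y).1
  have h2 := norm_transverse_sq_le_one (halfRep 0 y).2
  have h := norm_add_le (transverse (halfRep 0 y).1 ^ 2) (transverse (halfRep 0 y).2 ^ 2)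
  rw [norm_pow, norm_pow] at h
  rw [axisSq, norm_div, Complex.norm_ofNat]
  linarith

theorem axisSq_mul {u : UnitQuat} (hu : transverse u = 0) :
    axisSq (u * y) = axial u ^ 4 * axisSq y := by
  simp only [axisSq, halfRep_mul hu, Prod.smul_fst, Prod.smul_snd, ConjAct.toConjAct_smul,
    UnitQuat.transverse_conj_of_transverse_eq_zero hu]
  ring

end axis

theorem exists_sq_mul_norm_eq (z : ℂ) : ∃ b : Circle, (b : ℂ) ^ 2 * ‖z‖ = z := by
  obtain ⟨w, hw, hz⟩ := Complex.exists_norm_mul_eq_self z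
  obtain ⟨b, hb⟩ := IsAlgClosed.exists_pow_nat_eq w two_pos
  refine ⟨⟨b, mem_sphere_zero_iff_norm.2 ?_⟩, ?_⟩
  · rw [← pow_eq_one_iff_of_nonneg (norm_nonneg _) two_ne_zero, ← norm_pow, hb, hw]
  · exact hb ▸ hz

theorem conj_circle_mul_self (b : Circle) : conj (b : ℂ) * b = 1 := by
  simp [Complex.conj_mul', Circle.norm_coe]

theorem exists_sq_mul_norm_eq_iff {z z' : ℂ} :
    (∃ b : Circle, (b : ℂ) ^ 2 * ‖z‖ = z ∧ (b : ℂ) ^ 2 * ‖z'‖ = z') ↔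
      conj z * z' = ‖conj z * z'‖ := by
  have conj_sq_mul_sq (b : Circle) : conj ((b : ℂ) ^ 2) * (b : ℂ) ^ 2 = 1 := by
    rw [map_pow, ← mul_pow, conj_circle_mul_self, one_pow]
  refine ⟨fun ⟨b, hz, hz'⟩ ↦ ?_, fun h ↦ ?_⟩
  · rw [norm_mul, RCLike.norm_conj, Complex.ofReal_mul]
    nth_rw 1 [← hz, ← hz']
    rw [map_mul, Complex.conj_ofReal]
    linear_combination ‖z‖ * ‖z'‖ * conj_sq_mul_sq b
  · rcases eq_or_ne z 0 with rfl | hz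
    · obtain ⟨b, hz'⟩ := exists_sq_mul_norm_eq z'
      exact ⟨b, by simp, hz'⟩
    · obtain ⟨b, hbz⟩ := exists_sq_mul_norm_eq z
      refine ⟨b, hbz, mul_left_cancel₀ ((map_ne_zero conj).2 hz) ?_⟩
      rw [h, norm_mul, RCLike.norm_conj, Complex.ofReal_mul]
      nth_rw 1 [← hbz]
      rw [map_mul, Complex.conj_ofReal]
      linear_combination ‖z‖ * ‖z'‖ * conj_sq_mul_sq b

theorem smul_eq_smul_of_axial_eq_zero {u w : UnitQuat} (hu : transverse u = 0)
    (hw : axial w = 0) {y : UnitQuat}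
    (h : transverse w ^ 2 * ‖axisSq y‖ = axial u ^ 2 * axisSq y) :
    toConjAct w • halfRep 0 y = toConjAct u • halfRep 0 y :=
  Prod.ext ((isAligned_halfRep_zero y).1.conj_eq_conj_of_axial_eq_zero hu hw h)
    ((isAligned_halfRep_zero y).2.conj_eq_conj_of_axial_eq_zero hu hw h)

theorem axial_of_smul_eq_smul {u w : UnitQuat} (hu : transverse u = 0) {y : UnitQuat}
    (hy : axisSq y ≠ 0) (h : toConjAct w • halfRep 0 y = toConjAct u • halfRep 0 y) :
    axial u ^ 2 * conj (axial w) = axial w ∧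
      (axial w = 0 → transverse w ^ 2 * ‖axisSq y‖ = axial u ^ 2 * axisSq y) := by
  rcases transverse_ne_zero_of_axisSq_ne_zero y hy with h1 | h2
  · exact (isAligned_halfRep_zero y).1.axial_of_conj_eq_conj hu h1 (congrArg Prod.fst h)
  · exact (isAligned_halfRep_zero y).2.axial_of_conj_eq_conj hu h2 (congrArg Prod.snd h)

theorem smul_eq_smul_of_axial_sq_eq {u u' : UnitQuat} (hu : transverse u = 0)
    (hu' : transverse u' = 0) (h : axial u ^ 2 = axial u' ^ 2) (p : UnitQuat × UnitQuat) :
    toConjAct u • p = toConjAct u' • p := by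
  simp only [Prod.ext_iff, Prod.smul_fst, Prod.smul_snd, ConjAct.toConjAct_smul, UnitQuat.ext_iff,
    UnitQuat.axial_conj_of_transverse_eq_zero, UnitQuat.transverse_conj_of_transverse_eq_zero,
    hu, hu', h, and_self]

theorem conj_axial_mul_sq_eq_one_iff {u : UnitQuat} (hu : transverse u = 0) (z : ℂ) :
    (conj (axial u) * z) ^ 2 = 1 ↔ axial u ^ 2 = z ^ 2 := by
  have hn := UnitQuat.axial_mul_conj_of_transverse_eq_zero hu
  constructor <;> intro h
  · linear_combination (axial u * conj (axial u) + 1) * z ^ 2 * hn - axial u ^ 2 * h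
  · linear_combination (axial u * conj (axial u) + 1) * hn - conj (axial u) ^ 2 * h

theorem exists_sq_mul_norm_eq_axial_sq_mul_iff {u u' : UnitQuat} (hu : transverse u = 0)
    (hu' : transverse u' = 0) (z z' : ℂ) :
    (∃ b : Circle, (b : ℂ) ^ 2 * ‖z‖ = axial u ^ 2 * z ∧
      (b : ℂ) ^ 2 * ‖z'‖ = axial u' ^ 2 * z') ↔
        (conj (axial u) * axial u') ^ 2 * (conj z * z') = ‖conj z * z'‖ := by
  have ha := UnitQuat.norm_axial_of_transverse_eq_zero hu
  have ha' := UnitQuat.norm_axial_of_transverse_eq_zero hu'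
  have h := @exists_sq_mul_norm_eq_iff (axial u ^ 2 * z) (axial u' ^ 2 * z')
  simp only [norm_mul, norm_pow, ha, ha', one_pow, one_mul, RCLike.norm_conj, map_mul,
    map_pow] at h ⊢
  rw [h, mul_mul_mul_comm, ← mul_pow]

theorem exists_smul_halfRep_zero_iff {u u' : UnitQuat} (hu : transverse u = 0)
    (hu' : transverse u' = 0) (y y' : UnitQuat) :
    (∃ w : UnitQuat, toConjAct w • halfRep 0 y = toConjAct u • halfRep 0 y ∧
        toConjAct w • halfRep 0 y' = toConjAct u' • halfRep 0 y') ↔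
      (conj (axial u) * axial u') ^ 2 = 1 ∨
        (conj (axial u) * axial u') ^ 2 * (conj (axisSq y) * axisSq y') =
          ‖conj (axisSq y) * axisSq y'‖ := by
  rw [conj_axial_mul_sq_eq_one_iff hu]
  constructor
  · rintro ⟨w, hw, hw'⟩
    by_cases hax : axial w = 0
    · refine .inr <| (exists_sq_mul_norm_eq_axial_sq_mul_iff hu hu' _ _).1
        ⟨⟨transverse w, mem_sphere_zero_iff_norm.2
        (UnitQuat.norm_transverse_of_axial_eq_zero hax)⟩, ?_, ?_⟩
      · rcases eq_or_ne (axisSq y) 0 with h0 | h0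
        · simp [h0]
        · exact (axial_of_smul_eq_smul hu h0 hw).2 hax
      · rcases eq_or_ne (axisSq y') 0 with h0 | h0
        · simp [h0]
        · exact (axial_of_smul_eq_smul hu' h0 hw').2 hax
    · refine or_iff_not_imp_right.2 fun h ↦ ?_
      have h0 : axisSq y ≠ 0 := by rintro h0; simp [h0] at h
      have h0' : axisSq y' ≠ 0 := by rintro h0'; simp [h0'] at h
      exact mul_right_cancel₀ ((map_ne_zero conj).2 hax) <|
        (axial_of_smul_eq_smul hu h0 hw).1.trans (axial_of_smul_eq_smul hu' h0' hw').1.symm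
  · rintro (h | h)
    · exact ⟨u, rfl, smul_eq_smul_of_axial_sq_eq hu hu' h _⟩
    · obtain ⟨b, h, h'⟩ := (exists_sq_mul_norm_eq_axial_sq_mul_iff hu hu' _ _).2 h
      let w := UnitQuat.mk 0 b (by simp [Circle.norm_coe])
      have hw : axial w = 0 := UnitQuat.axial_mk _ _ _
      exact ⟨w, smul_eq_smul_of_axial_eq_zero hu hw (by simpa [w] using h),
        smul_eq_smul_of_axial_eq_zero hu' hw (by simpa [w] using h')⟩

/-! ### Ellipses in the unit disk -/

/-- The point with coordinates `p` on the ellipse with semiaxes `D + (1 - D) τ` and `D`; these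
ellipses foliate the unit disk minus the segment `[-τ, τ]`. -/
def ellipse (τ D : ℝ) (p : ℂ) : ℂ := ⟨(D + (1 - D) * τ) * p.re, D * p.im⟩

theorem sq_lt_sq_of_mul_eq_mul {a b x y : ℝ} (ha : 0 ≤ a) (hab : a < b) (h : a * x = b * y)
    (hy : y ≠ 0) : y ^ 2 < x ^ 2 := by
  have hy2 : 0 < y ^ 2 := by positivity
  have hab2 : a ^ 2 < b ^ 2 := pow_lt_pow_left₀ hab ha two_ne_zero
  have h2 : a ^ 2 * x ^ 2 = b ^ 2 * y ^ 2 := by rw [← mul_pow, h, mul_pow]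
  by_contra! hle
  nlinarith [mul_le_mul_of_nonneg_left hle (sq_nonneg a), mul_lt_mul_of_pos_right hab2 hy2]

theorem le_of_ellipse_eq_ellipse {τ D D' : ℝ} (hτ : τ ∈ Set.Ico (0 : ℝ) 1)
    (hD : D ∈ Set.Icc (0 : ℝ) 1) {p p' : Circle} (h : ellipse τ D p = ellipse τ D' p') :
    D' ≤ D := by
  by_contra! hlt
  have hp := Circle.normSq_coe p
  have hp' := Circle.normSq_coe p'
  rw [Complex.normSq_apply] at hp hp'
  simp only [ellipse, Complex.mk.injEq] at h
  have hE : 0 ≤ D + (1 - D) * τ := add_nonneg hD.1 (mul_nonneg (sub_nonneg.2 hD.2) hτ.1)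
  have hre := sq_lt_sq_of_mul_eq_mul hE (by nlinarith [hτ.2] : _ < D' + (1 - D') * τ) h.1
  have him := sq_lt_sq_of_mul_eq_mul hD.1 hlt h.2
  rcases eq_or_ne (p' : ℂ).re 0 with h0 | h0
  · have h1 : (p' : ℂ).im ≠ 0 := by rintro h1; simp [h0, h1] at hp'
    nlinarith [him h1]
  · rcases eq_or_ne (p' : ℂ).im 0 with h1 | h1
    · nlinarith [hre h0]
    · nlinarith [hre h0, him h1]

theorem ellipse_injective {τ D : ℝ} (hτ : τ ∈ Set.Ico (0 : ℝ) 1) (hD : D ∈ Set.Ioc (0 : ℝ) 1) :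
    Function.Injective (ellipse τ D) := by
  intro p p' h
  simp only [ellipse, Complex.mk.injEq] at h
  have hE : 0 < D + (1 - D) * τ :=
    add_pos_of_pos_of_nonneg hD.1 (mul_nonneg (sub_nonneg.2 hD.2) hτ.1)
  exact Complex.ext (mul_left_cancel₀ hE.ne' h.1) (mul_left_cancel₀ hD.1.ne' h.2)

theorem exists_circle_of_sq_add_sq {x y : ℝ} (h : x ^ 2 + y ^ 2 = 1) :
    ∃ p : Circle, (p : ℂ) = ⟨x, y⟩ :=
  ⟨⟨⟨x, y⟩, mem_sphere_zero_iff_norm.2 (by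
    rw [← sq_eq_sq₀ (norm_nonneg _) zero_le_one, ← Complex.normSq_eq_norm_sq, Complex.normSq_mk]
    linarith)⟩, rfl⟩

theorem exists_ellipse_zero_eq {τ x : ℝ} (h : |x| ≤ τ) : ∃ p : Circle, ellipse τ 0 p = x := by
  have hτ : 0 ≤ τ := (abs_nonneg x).trans h
  obtain ⟨p, hp⟩ : ∃ p : Circle, (p : ℂ) = ⟨x / τ, √(1 - (x / τ) ^ 2)⟩ := by
    refine exists_circle_of_sq_add_sq ?_
    rw [Real.sq_sqrt, add_sub_cancel]
    rw [sub_nonneg, sq_le_one_iff_abs_le_one, abs_div, abs_of_nonneg hτ]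
    exact div_le_one_of_le₀ h hτ
  refine ⟨p, Complex.ext ?_ (by simp [ellipse])⟩
  rcases eq_or_ne τ 0 with rfl | hτ0
  · simp [ellipse, abs_nonpos_iff.1 h]
  · simp [ellipse, hp, mul_div_cancel₀ _ hτ0]

theorem exists_ellipse_eq_of_pos {τ D : ℝ} (hD : 0 < D) (hE : 0 < D + (1 - D) * τ) {z : ℂ}
    (h : z.re ^ 2 * D ^ 2 + z.im ^ 2 * (D + (1 - D) * τ) ^ 2 = D ^ 2 * (D + (1 - D) * τ) ^ 2) :
    ∃ p : Circle, ellipse τ D p = z := by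
  obtain ⟨p, hp⟩ : ∃ p : Circle, (p : ℂ) = ⟨z.re / (D + (1 - D) * τ), z.im / D⟩ := by
    refine exists_circle_of_sq_add_sq ?_
    field_simp
    linarith
  exact ⟨p, by simp [ellipse, hp, mul_div_cancel₀ _ hE.ne', mul_div_cancel₀ _ hD.ne']⟩

theorem exists_ellipse_eq_of_le {τ D₀ : ℝ} (hτ : 0 ≤ τ) (hD₀ : D₀ ∈ Set.Ioc (0 : ℝ) 1) {z : ℂ}
    (hz : z.re ^ 2 + z.im ^ 2 ≤ 1)
    (hedge : D₀ ^ 2 * (D₀ + (1 - D₀) * τ) ^ 2 ≤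
      z.re ^ 2 * D₀ ^ 2 + z.im ^ 2 * (D₀ + (1 - D₀) * τ) ^ 2) :
    ∃ (D : unitInterval) (p : Circle), ellipse τ D p = z := by
  obtain ⟨D, hD, hroot⟩ : ∃ D ∈ Set.Icc D₀ 1, z.re ^ 2 * D ^ 2 +
      z.im ^ 2 * (D + (1 - D) * τ) ^ 2 - D ^ 2 * (D + (1 - D) * τ) ^ 2 = 0 := by
    refine intermediate_value_Icc' (f := fun D ↦ z.re ^ 2 * D ^ 2 +
      z.im ^ 2 * (D + (1 - D) * τ) ^ 2 - D ^ 2 * (D + (1 - D) * τ) ^ 2) hD₀.2 (by fun_prop)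
      ⟨?_, sub_nonneg.2 hedge⟩
    norm_num
    linarith
  have hDpos : 0 < D := hD₀.1.trans_le hD.1
  exact ⟨⟨D, hDpos.le, hD.2⟩, exists_ellipse_eq_of_pos hDpos
    (add_pos_of_pos_of_nonneg hDpos (mul_nonneg (sub_nonneg.2 hD.2) hτ)) (sub_eq_zero.1 hroot)⟩

theorem exists_ellipse_eq {τ : ℝ} (hτ : τ ∈ Set.Ico (0 : ℝ) 1) {z : ℂ} (hz : ‖z‖ ≤ 1) :
    ∃ (D : unitInterval) (p : Circle), ellipse τ D p = z := by
  have hz2 : z.re ^ 2 + z.im ^ 2 ≤ 1 := by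
    rw [sq, sq, ← Complex.normSq_apply, Complex.normSq_eq_norm_sq]
    exact pow_le_one₀ (norm_nonneg _) hz
  have hτ1 : 0 < 1 - τ := sub_pos.2 hτ.2
  -- The least `D` for which both coordinates of `z` are bounded by the semiaxes.
  obtain ⟨D₀, hD₀⟩ : ∃ D₀, D₀ = max |z.im| ((|z.re| - τ) / (1 - τ)) := ⟨_, rfl⟩
  have hD₀1 : D₀ ≤ 1 := hD₀ ▸ max_le ((Complex.abs_im_le_norm z).trans hz) ((div_le_one hτ1).2
    (by linarith [Complex.abs_re_le_norm z]))
  have him : |z.im| ≤ D₀ := hD₀ ▸ le_max_left _ _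
  have hre : |z.re| ≤ D₀ + (1 - D₀) * τ := by
    have := (div_le_iff₀ hτ1).1 (hD₀ ▸ le_max_right |z.im| ((|z.re| - τ) / (1 - τ)))
    linarith
  rcases ((abs_nonneg _).trans him).eq_or_lt with rfl | h0
  · obtain ⟨p, hp⟩ := exists_ellipse_zero_eq (by simpa using hre)
    exact ⟨0, p, hp.trans (Complex.ext rfl (abs_nonpos_iff.1 him).symm)⟩
  have hedge : D₀ ^ 2 * (D₀ + (1 - D₀) * τ) ^ 2 ≤
      z.re ^ 2 * D₀ ^ 2 + z.im ^ 2 * (D₀ + (1 - D₀) * τ) ^ 2 := by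
    rcases max_choice |z.im| ((|z.re| - τ) / (1 - τ)) with h | h
    · rw [← sq_abs z.im, ← h, ← hD₀]
      nlinarith [sq_nonneg (z.re * D₀)]
    · have hE : D₀ + (1 - D₀) * τ = |z.re| := by
        rw [← hD₀, eq_div_iff hτ1.ne'] at h
        linarith
      rw [hE, sq_abs]
      nlinarith [sq_nonneg (z.im * z.re)]
  exact exists_ellipse_eq_of_le hτ.1 ⟨h0, hD₀1⟩ hz2 hedge

/-- A homotopy, as `D` grows from `0` to `1`, from `(|z| + z) / 2` to the constant `1`. -/
def blend (D : ℝ) (z : ℂ) : ℂ := D + (1 - D) * ((‖z‖ + z) / 2)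

theorem blend_mul_conj (D : ℝ) {τ : ℝ} (hτ : 0 ≤ τ) (l : Circle) :
    blend D (τ * (l : ℂ) ^ 2) * conj (l : ℂ) = conj (ellipse τ D l) := by
  have hnorm : ‖(τ * (l : ℂ) ^ 2 : ℂ)‖ = τ := by
    rw [norm_mul, norm_pow, Circle.norm_coe, Complex.norm_of_nonneg hτ, one_pow, mul_one]
  have hl := Complex.mul_conj (l : ℂ)
  rw [Circle.normSq_coe, Complex.ofReal_one] at hl
  have hc : conj (ellipse τ D l) = D * conj (l : ℂ) + (1 - D) * τ * ((l + conj (l : ℂ)) / 2) := by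
    apply Complex.ext
    · simp [ellipse]
      ring
    · simp [ellipse]
  rw [blend, hnorm, hc]
  linear_combination (1 - D) * τ * l / 2 * hl

theorem norm_circle_sq_mul (k : Circle) (z : ℂ) : ‖(k : ℂ) ^ 2 * z‖ = ‖z‖ := by
  rw [norm_mul, norm_pow, Circle.norm_coe, one_pow, one_mul]

theorem blend_circle_sq_mul_eq_iff {z : ℂ} (hz : ‖z‖ < 1) (k : Circle) {D D' : ℝ}
    (hD : D ∈ Set.Icc (0 : ℝ) 1) (hD' : D' ∈ Set.Icc (0 : ℝ) 1) :
    blend D' ((k : ℂ) ^ 2 * z) = k * blend D z ↔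
      D = D' ∧ ((k : ℂ) = 1 ∨ D = 0 ∧ (k : ℂ) * z = ‖z‖) := by
  refine ⟨fun h ↦ ?_, ?_⟩
  · obtain ⟨l, hl⟩ := exists_sq_mul_norm_eq z
    have hτ : ‖z‖ ∈ Set.Ico (0 : ℝ) 1 := ⟨norm_nonneg z, hz⟩
    have hellipse : ellipse ‖z‖ D l = ellipse ‖z‖ D' (k * l : Circle) := by
      apply (starRingEnd ℂ).injective
      rw [← blend_mul_conj D hτ.1, ← blend_mul_conj D' hτ.1, Circle.coe_mul, mul_pow,
        mul_left_comm, mul_comm (‖z‖ : ℂ), hl, h, map_mul]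
      linear_combination -blend D z * conj (l : ℂ) * conj_circle_mul_self k
    obtain rfl : D = D' := le_antisymm (le_of_ellipse_eq_ellipse hτ hD' hellipse.symm)
      (le_of_ellipse_eq_ellipse hτ hD hellipse)
    refine ⟨rfl, ?_⟩
    rcases hD.1.eq_or_lt with rfl | hpos
    · rw [blend, norm_circle_sq_mul, blend, Complex.ofReal_zero] at h
      have hprod : ((k : ℂ) - 1) * (k * z - ‖z‖) = 0 := by linear_combination 2 * h
      exact (mul_eq_zero.1 hprod).imp sub_eq_zero.1 fun h ↦ ⟨rfl, sub_eq_zero.1 h⟩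
    · exact .inl (by simpa [eq_comm] using ellipse_injective hτ ⟨hpos, hD.2⟩ hellipse)
  · rintro ⟨rfl, hk | ⟨rfl, hk⟩⟩
    · simp [hk]
    · rw [blend, norm_circle_sq_mul, blend, Complex.ofReal_zero, ← hk]
      ring

theorem exists_blend_circle_sq_mul_eq {z μ : ℂ} (hz : ‖z‖ < 1) (hμ : ‖μ‖ ≤ 1) :
    ∃ (D : unitInterval) (k : Circle), blend D ((k : ℂ) ^ 2 * z) = k * μ := by
  obtain ⟨l, hl⟩ := exists_sq_mul_norm_eq z
  have hτ : ‖z‖ ∈ Set.Ico (0 : ℝ) 1 := ⟨norm_nonneg z, hz⟩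
  obtain ⟨D, p, hp⟩ := exists_ellipse_eq hτ (z := conj (μ * conj (l : ℂ)))
    (by simpa [Circle.norm_coe] using hμ)
  refine ⟨D, p * l⁻¹, ?_⟩
  have h := blend_mul_conj D hτ.1 p
  rw [hp, Complex.conj_conj] at h
  have harg : ((p * l⁻¹ : Circle) : ℂ) ^ 2 * z = ‖z‖ * (p : ℂ) ^ 2 := by
    nth_rw 1 [← hl]
    rw [Circle.coe_mul, Circle.coe_inv_eq_conj]
    linear_combination (p : ℂ) ^ 2 * ‖z‖ * (conj (l : ℂ) * l + 1) * conj_circle_mul_self l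
  rw [harg, Circle.coe_mul, Circle.coe_inv_eq_conj]
  linear_combination -blend D (‖z‖ * (p : ℂ) ^ 2) * conj_circle_mul_self p + p * h

theorem blend_one (z : ℂ) : blend 1 z = 1 := by simp [blend]

theorem norm_blend_le {D : ℝ} (hD : D ∈ Set.Icc (0 : ℝ) 1) (z : ℂ) :
    ‖blend D z‖ ≤ D + (1 - D) * ‖z‖ := by
  have hD1 : 0 ≤ 1 - D := sub_nonneg.2 hD.2
  have h := norm_add_le (‖z‖ : ℂ) z
  rw [Complex.norm_real, norm_norm] at h
  have h' := norm_add_le (D : ℂ) ((1 - D : ℝ) * ((‖z‖ + z) / 2))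
  rw [norm_mul, norm_div, Complex.norm_real, Complex.norm_real, Real.norm_of_nonneg hD.1,
    Real.norm_of_nonneg hD1, Complex.norm_ofNat] at h'
  push_cast at h'
  rw [blend]
  nlinarith

theorem norm_blend_lt_one {D : ℝ} (hD : D ∈ Set.Ico (0 : ℝ) 1) {z : ℂ} (hz : ‖z‖ < 1) :
    ‖blend D z‖ < 1 := by
  have h := norm_blend_le ⟨hD.1, hD.2.le⟩ z
  nlinarith [hD.2]

/-! ### Singular value decomposition -/

section svd

open Matrix

/-- The special unitary matrix of a unit quaternion. -/
def toMatrix (q : UnitQuat) : Matrix (Fin 2) (Fin 2) ℂ :=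
  !![axial q, transverse q; -conj (transverse q), conj (axial q)]

theorem toMatrix_mul (p q : UnitQuat) : toMatrix (p * q) = toMatrix p * toMatrix q := by
  ext i j
  fin_cases i <;> fin_cases j <;>
    simp [toMatrix, Matrix.mul_apply, UnitQuat.axial_mul, UnitQuat.transverse_mul] <;> ring

theorem toMatrix_one : toMatrix 1 = 1 := by
  ext i j
  fin_cases i <;> fin_cases j <;> simp [toMatrix]

theorem det_toMatrix (q : UnitQuat) : (toMatrix q).det = 1 := by
  rw [toMatrix, det_fin_two_of, ← q.mul_conj_add]
  ring

theorem toMatrix_mul_toMatrix_inv (q : UnitQuat) : toMatrix q * toMatrix q⁻¹ = 1 := by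
  rw [← toMatrix_mul, mul_inv_cancel, toMatrix_one]

theorem toMatrix_inv_mul_toMatrix (q : UnitQuat) : toMatrix q⁻¹ * toMatrix q = 1 := by
  rw [← toMatrix_mul, inv_mul_cancel, toMatrix_one]

/-- The matrix with singular value decomposition given by special unitary factors `y` and `y'`,
largest singular value `1` and other singular value `‖m‖`. -/
def svdMatrix (y y' : UnitQuat) (m : ℂ) : Matrix (Fin 2) (Fin 2) ℂ :=
  toMatrix y⁻¹ * diagonal ![1, m] * toMatrix y'

theorem toMatrix_mul_svdMatrix_mul_toMatrix (u y y' : UnitQuat) (m : ℂ) :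
    toMatrix (u * y) * svdMatrix y y' m * toMatrix y'⁻¹ = toMatrix u * diagonal ![1, m] := by
  rw [svdMatrix, toMatrix_mul, mul_assoc, mul_assoc, mul_assoc, mul_assoc,
    toMatrix_mul_toMatrix_inv, mul_one, ← mul_assoc (toMatrix y), toMatrix_mul_toMatrix_inv,
    one_mul]

theorem svdMatrix_ne_zero (y y' : UnitQuat) (m : ℂ) : svdMatrix y y' m ≠ 0 := by
  intro h
  have h1 := toMatrix_mul_svdMatrix_mul_toMatrix 1 y y' m
  rw [h, mul_zero, zero_mul, toMatrix_one, one_mul] at h1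
  simpa using congrFun₂ h1 0 0

theorem svdMatrix_mul_mul_eq_smul_iff (u u' y y' : UnitQuat) (m m' c : ℂ) :
    svdMatrix (u * y) (u' * y') m' = c • svdMatrix y y' m ↔
      diagonal ![1, m'] * toMatrix u' = c • (toMatrix u * diagonal ![1, m]) := by
  have hl : toMatrix (u * y) * svdMatrix (u * y) (u' * y') m' * toMatrix y'⁻¹ =
      diagonal ![1, m'] * toMatrix u' := by
    have h := toMatrix_mul_svdMatrix_mul_toMatrix 1 (u * y) (u' * y') m'
    rw [one_mul, toMatrix_one, one_mul] at h
    rw [← h, mul_assoc _ _ (toMatrix u'), ← toMatrix_mul, _root_.mul_inv_rev,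
      inv_mul_cancel_right]
  have hr : toMatrix (u * y) * (c • svdMatrix y y' m) * toMatrix y'⁻¹ =
      c • (toMatrix u * diagonal ![1, m]) := by
    rw [mul_smul_comm, smul_mul_assoc, toMatrix_mul_svdMatrix_mul_toMatrix]
  rw [← hl, ← hr]
  refine ⟨fun h ↦ by rw [h], fun h ↦ ?_⟩
  have h' := congrArg (toMatrix (u * y)⁻¹ * · * toMatrix y') h
  simpa only [mul_assoc, toMatrix_inv_mul_toMatrix, mul_one, ← mul_assoc (toMatrix (u * y)⁻¹),
    one_mul] using h'

theorem diagonal_mul_toMatrix_eq_iff (u u' : UnitQuat) (m m' c : ℂ) :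
    diagonal ![1, m'] * toMatrix u' = c • (toMatrix u * diagonal ![1, m]) ↔
      (axial u' = c * axial u ∧ transverse u' = c * (transverse u * m)) ∧
        m' * conj (transverse u') = c * conj (transverse u) ∧
        m' * conj (axial u') = c * (conj (axial u) * m) := by
  rw [← Matrix.ext_iff]
  simp [Fin.forall_fin_two, toMatrix, vecMul_diagonal]

theorem svdMatrix_mul_mul_of_transverse_eq_zero {u u' : UnitQuat} (hu : transverse u = 0)
    (hu' : transverse u' = 0) (y y' : UnitQuat) (m : ℂ) :
    svdMatrix (u * y) (u' * y') ((conj (axial u) * axial u') ^ 2 * m) =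
      (conj (axial u) * axial u') • svdMatrix y y' m := by
  have n := UnitQuat.axial_mul_conj_of_transverse_eq_zero hu
  have n' := UnitQuat.axial_mul_conj_of_transverse_eq_zero hu'
  rw [svdMatrix_mul_mul_eq_smul_iff, diagonal_mul_toMatrix_eq_iff]
  refine ⟨⟨?_, by simp [hu, hu']⟩, by simp [hu, hu'], ?_⟩
  · linear_combination -axial u' * n
  · linear_combination conj (axial u) ^ 2 * axial u' * m * n'

theorem exists_svdMatrix_eq_smul_iff_of_norm_lt {m m' : ℂ} (h : ‖m * m'‖ < 1)
    (u u' y y' : UnitQuat) :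
    (∃ c : ℂ, c ≠ 0 ∧ svdMatrix (u * y) (u' * y') m' = c • svdMatrix y y' m) ↔
      transverse u = 0 ∧ transverse u' = 0 ∧ m' = (conj (axial u) * axial u') ^ 2 * m := by
  constructor
  · rintro ⟨c, hc, heq⟩
    obtain ⟨⟨h1, h2⟩, h3, h4⟩ := (diagonal_mul_toMatrix_eq_iff ..).1
      ((svdMatrix_mul_mul_eq_smul_iff ..).1 heq)
    have hu : transverse u = 0 := by
      have hn := congrArg (‖·‖) h3
      rw [h2] at hn
      simp only [norm_mul, RCLike.norm_conj] at hn h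
      have hz : ‖c‖ * ‖transverse u‖ * (1 - ‖m‖ * ‖m'‖) = 0 := by linear_combination -hn
      simpa [hc, (sub_pos.2 h).ne'] using hz
    have hu' : transverse u' = 0 := by rw [h2, hu, zero_mul, mul_zero]
    refine ⟨hu, hu', ?_⟩
    have n := UnitQuat.axial_mul_conj_of_transverse_eq_zero hu
    have n' := UnitQuat.axial_mul_conj_of_transverse_eq_zero hu'
    linear_combination axial u' * h4 - m' * n' - conj (axial u) * m * axial u' *
      (conj (axial u) * h1 + c * n)
  · rintro ⟨hu, hu', hm⟩
    refine ⟨conj (axial u) * axial u', ?_, hm ▸ svdMatrix_mul_mul_of_transverse_eq_zero hu hu' ..⟩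
    rw [← norm_ne_zero_iff, norm_mul, RCLike.norm_conj,
      UnitQuat.norm_axial_of_transverse_eq_zero hu, UnitQuat.norm_axial_of_transverse_eq_zero hu']
    norm_num

theorem exists_svdMatrix_one_eq_smul_iff (u u' y y' : UnitQuat) :
    (∃ c : ℂ, c ≠ 0 ∧ svdMatrix (u * y) (u' * y') 1 = c • svdMatrix y y' 1) ↔
      u' = u ∨ u' = -u := by
  simp only [svdMatrix_mul_mul_eq_smul_iff]
  have h1 : diagonal ![1, 1] = (1 : Matrix (Fin 2) (Fin 2) ℂ) := by
    ext i j
    fin_cases i <;> fin_cases j <;> simp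
  simp only [h1, one_mul, mul_one]
  constructor
  · rintro ⟨c, -, hc⟩
    have hdet := congrArg det hc
    rw [det_smul, det_toMatrix, det_toMatrix, Fintype.card_fin, mul_one, eq_comm, sq_eq_one_iff]
      at hdet
    have h00 := congrFun₂ hc 0 0
    have h01 := congrFun₂ hc 0 1
    simp only [toMatrix, of_apply, cons_val', cons_val_zero, cons_val_one, Matrix.smul_apply,
      smul_eq_mul, cons_val_fin_one] at h00 h01
    rcases hdet with rfl | rfl
    · exact .inl (UnitQuat.ext (by simpa using h00) (by simpa using h01))
    · exact .inr (UnitQuat.ext (by simpa using h00) (by simpa using h01))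
  · rintro (rfl | rfl)
    · exact ⟨1, one_ne_zero, (one_smul ℂ _).symm⟩
    · refine ⟨-1, by norm_num, ?_⟩
      ext i j
      fin_cases i <;> fin_cases j <;> simp [toMatrix]

end svd

section svd

open Matrix

theorem exists_norm_sq_mul_sub_mul_eq (a b : ℂ) :
    ∃ q : UnitQuat, ‖a * axial q - b * conj (transverse q)‖ ^ 2 = ‖a‖ ^ 2 + ‖b‖ ^ 2 := by
  by_cases h : conj a ≠ 0 ∨ -b ≠ 0
  · obtain ⟨r, q, hr, ha, hb⟩ := UnitQuat.exists_pos_smul_of_ne_zero h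
    refine ⟨q, ?_⟩
    have hsum : a * axial q - b * conj (transverse q) = (r * (‖a‖ ^ 2 + ‖b‖ ^ 2) : ℝ) := by
      push_cast
      rw [ha, hb, ← Complex.mul_conj', ← Complex.mul_conj', map_mul, Complex.conj_ofReal, map_neg]
      ring
    have hq := q.norm_sq_add
    rw [ha, hb, norm_mul, norm_mul, RCLike.norm_conj, norm_neg, Complex.norm_of_nonneg hr.le] at hq
    rw [hsum, Complex.norm_real, Real.norm_eq_abs, sq_abs]
    linear_combination (‖a‖ ^ 2 + ‖b‖ ^ 2) * hq
  · simp only [ne_eq, map_eq_zero, neg_eq_zero, not_or, not_not] at h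
    exact ⟨1, by simp [h.1, h.2]⟩

theorem eq_zero_of_forall_norm_le {N : Matrix (Fin 2) (Fin 2) ℂ}
    (h : ∀ p q, ‖(toMatrix p * N * toMatrix q) 0 0‖ ≤ ‖N 0 0‖) :
    N 0 1 = 0 ∧ N 1 0 = 0 ∧ ‖N 1 1‖ ≤ ‖N 0 0‖ := by
  have eq_zero {z w : ℂ} (hzw : ‖z‖ ^ 2 + ‖w‖ ^ 2 ≤ ‖z‖ ^ 2) : w = 0 :=
    norm_eq_zero.1 (pow_eq_zero_iff two_ne_zero |>.1 (by nlinarith [sq_nonneg ‖w‖]))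
  refine ⟨?_, ?_, ?_⟩
  · obtain ⟨q, hq⟩ := exists_norm_sq_mul_sub_mul_eq (N 0 0) (N 0 1)
    refine eq_zero (z := N 0 0) (hq.symm.trans_le (pow_le_pow_left₀ (norm_nonneg _) ?_ 2))
    simpa [toMatrix, Matrix.mul_apply, vecMul, dotProduct, sub_eq_add_neg] using h 1 q
  · obtain ⟨q, hq⟩ := exists_norm_sq_mul_sub_mul_eq (conj (N 0 0)) (conj (N 1 0))
    rw [RCLike.norm_conj, RCLike.norm_conj] at hq
    refine eq_zero (z := N 0 0) (hq.symm.trans_le (pow_le_pow_left₀ (norm_nonneg _) ?_ 2))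
    have h' := h q⁻¹ 1
    rw [toMatrix_one, mul_one, ← RCLike.norm_conj ((toMatrix q⁻¹ * N) 0 0)] at h'
    simpa [toMatrix, Matrix.mul_apply, sub_eq_add_neg, mul_comm] using h'
  · have h' := h (UnitQuat.mk 0 1 (by simp)) (UnitQuat.mk 0 1 (by simp))
    simpa [toMatrix, Matrix.mul_apply, vecMul, dotProduct] using h'

theorem continuous_toMatrix : Continuous toMatrix := by
  refine continuous_matrix fun i j ↦ ?_
  have ha := UnitQuat.continuous_axial
  have hb := UnitQuat.continuous_transverse
  fin_cases i <;> fin_cases j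
  exacts [ha, hb, (Complex.continuous_conj.comp hb).neg, Complex.continuous_conj.comp ha]

theorem exists_eq_smul_svdMatrix {M : Matrix (Fin 2) (Fin 2) ℂ} (hM : M ≠ 0) :
    ∃ (c m : ℂ) (y y' : UnitQuat), c ≠ 0 ∧ ‖m‖ ≤ 1 ∧ M = c • svdMatrix y y' m := by
  obtain ⟨⟨y, z⟩, -, hmax⟩ := isCompact_univ.exists_isMaxOn Set.univ_nonempty
    (f := fun p : UnitQuat × UnitQuat ↦ ‖(toMatrix p.1 * M * toMatrix p.2) 0 0‖)
    (((((continuous_toMatrix.comp continuous_fst).matrix_mul continuous_const).matrix_mul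
      (continuous_toMatrix.comp continuous_snd)).matrix_elem 0 0).norm.continuousOn)
  set N := toMatrix y * M * toMatrix z with hN
  have hMN : M = toMatrix y⁻¹ * N * toMatrix z⁻¹ := by
    rw [hN, mul_assoc, mul_assoc, toMatrix_mul_toMatrix_inv, mul_one, ← mul_assoc,
      toMatrix_inv_mul_toMatrix, one_mul]
  obtain ⟨h01, h10, h11⟩ := eq_zero_of_forall_norm_le (N := N) fun p q ↦ by
    have := hmax (Set.mem_univ (p * y, z * q))
    simpa only [toMatrix_mul, mul_assoc, hN, Set.mem_ofPred_eq] using this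
  have h00 : N 0 0 ≠ 0 := by
    intro h0
    have hN0 : N = 0 := by
      ext i j
      fin_cases i <;> fin_cases j
      exacts [h0, h01, h10, norm_le_zero_iff.1 (by simpa [h0] using h11)]
    exact hM (by rw [hMN, hN0, mul_zero, zero_mul])
  refine ⟨N 0 0, N 1 1 / N 0 0, y, z⁻¹, h00, ?_, ?_⟩
  · rw [norm_div]
    exact div_le_one_of_le₀ h11 (norm_nonneg _)
  · have hdiag : N = N 0 0 • diagonal ![1, N 1 1 / N 0 0] := by
      ext i j
      fin_cases i <;> fin_cases j <;> simp [h01, h10, mul_div_cancel₀ _ h00]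
    nth_rw 1 [hMN, hdiag]
    rw [svdMatrix, mul_smul_comm, smul_mul_assoc]

/-- The matrix attached to the pair of half representations `halfRep D y` and `halfRep D y'`. Its
smaller singular value is chosen so that `y` and `y'` give proportional matrices precisely when
they give conjugate pairs. -/
def pairMatrix (D : ℝ) (y y' : UnitQuat) : Matrix (Fin 2) (Fin 2) ℂ :=
  svdMatrix y y' (blend D (conj (axisSq y) * axisSq y'))

theorem norm_conj_axisSq_mul_lt_one (y y' : UnitQuat) :
    ‖conj (axisSq y) * axisSq y'‖ < 1 := by
  rw [norm_mul, RCLike.norm_conj]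
  nlinarith [norm_axisSq_le y, norm_axisSq_le y', norm_nonneg (axisSq y), norm_nonneg (axisSq y')]

theorem conj_axisSq_mul_mul_mul {u u' : UnitQuat} (hu : transverse u = 0) (hu' : transverse u' = 0)
    (y y' : UnitQuat) : conj (axisSq (u * y)) * axisSq (u' * y') =
      ((conj (axial u) * axial u') ^ 2) ^ 2 * (conj (axisSq y) * axisSq y') := by
  rw [axisSq_mul _ hu, axisSq_mul _ hu', map_mul, map_pow]
  ring

theorem exists_eq_smul_pairMatrix {M : Matrix (Fin 2) (Fin 2) ℂ} (hM : M ≠ 0) :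
    ∃ (D : unitInterval) (c : ℂ) (y y' : UnitQuat), c ≠ 0 ∧ M = c • pairMatrix D y y' := by
  obtain ⟨c, m, y, y', hc, hm, rfl⟩ := exists_eq_smul_svdMatrix hM
  obtain ⟨D, k, hk⟩ := exists_blend_circle_sq_mul_eq (norm_conj_axisSq_mul_lt_one y y') hm
  obtain ⟨u, hu, huk⟩ := UnitQuat.exists_transverse_eq_zero_sq_eq (Circle.norm_coe k)
  have ha : axial u ≠ 0 :=
    norm_ne_zero_iff.1 (UnitQuat.norm_axial_of_transverse_eq_zero hu ▸ one_ne_zero)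
  have hpair : pairMatrix D y (u * y') = axial u • svdMatrix y y' m := by
    have hsq := conj_axisSq_mul_mul_mul UnitQuat.transverse_one hu y y'
    have hsvd := svdMatrix_mul_mul_of_transverse_eq_zero UnitQuat.transverse_one hu y y' m
    rw [UnitQuat.axial_one, map_one, one_mul, one_mul, huk] at hsq hsvd
    rw [pairMatrix, hsq, hk, hsvd]
  refine ⟨D, c * (axial u)⁻¹, y, u * y', mul_ne_zero hc (inv_ne_zero ha), ?_⟩
  rw [hpair, smul_smul, inv_mul_cancel_right₀ ha]

end svd

/-! ### Comparison of the fibres -/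

section fibres

variable {D D' : unitInterval} {u u' : UnitQuat}

theorem norm_conj_axial_mul_sq (hu : transverse u = 0) (hu' : transverse u' = 0) :
    ‖(conj (axial u) * axial u') ^ 2‖ = 1 := by
  rw [norm_pow, norm_mul, RCLike.norm_conj, UnitQuat.norm_axial_of_transverse_eq_zero hu,
    UnitQuat.norm_axial_of_transverse_eq_zero hu', one_mul, one_pow]

theorem eq_or_eq_neg_of_smul_halfRep_eq (hD : 0 < D) {w y : UnitQuat}
    (h : toConjAct w • halfRep D y = toConjAct u • halfRep D y) : w = u ∨ w = -u :=
  UnitQuat.eq_or_eq_neg_of_conj_eq_conj (not_commute_halfRep hD y) (congrArg Prod.fst h)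
    (congrArg Prod.snd h)

theorem exists_smul_halfRep_eq_smul_iff (hu : transverse u = 0) (hu' : transverse u' = 0)
    (y y' : UnitQuat) :
    (∃ w : UnitQuat, toConjAct w • halfRep D y = toConjAct u • halfRep D y ∧
        toConjAct w • halfRep D y' = toConjAct u' • halfRep D y') ↔
      (conj (axial u) * axial u') ^ 2 = 1 ∨ (D : ℝ) = 0 ∧
        (conj (axial u) * axial u') ^ 2 * (conj (axisSq y) * axisSq y') =
          ‖conj (axisSq y) * axisSq y'‖ := by
  rcases (unitInterval.nonneg' (t := D)).eq_or_lt with rfl | hD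
  · simpa using exists_smul_halfRep_zero_iff hu hu' y y'
  · have hD0 : (D : ℝ) ≠ 0 := ne_of_gt hD
    simp only [hD0, false_and, or_false, conj_axial_mul_sq_eq_one_iff hu]
    refine ⟨fun ⟨w, h, h'⟩ ↦ ?_, fun h ↦ ⟨u, rfl, smul_eq_smul_of_axial_sq_eq hu hu' h _⟩⟩
    rcases eq_or_eq_neg_of_smul_halfRep_eq hD h with rfl | rfl <;>
    rcases eq_or_eq_neg_of_smul_halfRep_eq hD h' with h | h <;>
    have hax := congrArg (axial · ^ 2) h <;>
    simpa using hax

theorem exists_smul_halfRep_mul_iff (hD : D < 1 ∨ D' < 1) (u u' y y' : UnitQuat) :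
    (∃ w : UnitQuat, toConjAct w • halfRep D y = halfRep D' (u * y) ∧
        toConjAct w • halfRep D y' = halfRep D' (u' * y')) ↔
      transverse u = 0 ∧ transverse u' = 0 ∧ D = D' ∧
        ((conj (axial u) * axial u') ^ 2 = 1 ∨ (D : ℝ) = 0 ∧
          (conj (axial u) * axial u') ^ 2 * (conj (axisSq y) * axisSq y') =
            ‖conj (axisSq y) * axisSq y'‖) := by
  constructor
  · rintro ⟨w, h, h'⟩
    obtain rfl := eq_of_smul_halfRep_eq h
    rw [or_self] at hD
    obtain ⟨v, hv, huv⟩ := exists_mul_eq_of_smul_halfRep_eq hD h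
    obtain ⟨v', hv', huv'⟩ := exists_mul_eq_of_smul_halfRep_eq hD h'
    obtain rfl := mul_right_cancel huv
    obtain rfl := mul_right_cancel huv'
    rw [halfRep_mul hv] at h
    rw [halfRep_mul hv'] at h'
    exact ⟨hv, hv', rfl, (exists_smul_halfRep_eq_smul_iff hv hv' y y').1 ⟨w, h, h'⟩⟩
  · rintro ⟨hu, hu', rfl, h⟩
    rw [halfRep_mul hu, halfRep_mul hu']
    exact (exists_smul_halfRep_eq_smul_iff hu hu' y y').2 h

theorem exists_pairMatrix_mul_eq_smul_iff (hD : D < 1 ∨ D' < 1) (u u' y y' : UnitQuat) :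
    (∃ c : ℂ, c ≠ 0 ∧ pairMatrix D' (u * y) (u' * y') = c • pairMatrix D y y') ↔
      transverse u = 0 ∧ transverse u' = 0 ∧ D = D' ∧
        ((conj (axial u) * axial u') ^ 2 = 1 ∨ (D : ℝ) = 0 ∧
          (conj (axial u) * axial u') ^ 2 * (conj (axisSq y) * axisSq y') =
            ‖conj (axisSq y) * axisSq y'‖) := by
  have hnorm : ‖blend D (conj (axisSq y) * axisSq y') *
      blend D' (conj (axisSq (u * y)) * axisSq (u' * y'))‖ < 1 := by
    have hle {E : unitInterval} {z : ℂ} (hz : ‖z‖ < 1) : ‖blend E z‖ ≤ 1 := by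
      have := norm_blend_le E.2 z
      nlinarith [E.2.1, E.2.2]
    rw [norm_mul]
    have h1 := norm_conj_axisSq_mul_lt_one y y'
    have h2 := norm_conj_axisSq_mul_lt_one (u * y) (u' * y')
    rcases hD with hD | hD
    · exact mul_lt_one_of_nonneg_of_lt_one_left (norm_nonneg _)
        (norm_blend_lt_one ⟨D.2.1, hD⟩ h1) (hle h2)
    · exact mul_lt_one_of_nonneg_of_lt_one_right (hle h1) (norm_nonneg _)
        (norm_blend_lt_one ⟨D'.2.1, hD⟩ h2)
  unfold pairMatrix
  rw [exists_svdMatrix_eq_smul_iff_of_norm_lt hnorm]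
  refine and_congr_right fun hu ↦ and_congr_right fun hu' ↦ ?_
  rw [conj_axisSq_mul_mul_mul hu hu', Subtype.ext_iff]
  exact blend_circle_sq_mul_eq_iff (norm_conj_axisSq_mul_lt_one y y')
    ⟨_, mem_sphere_zero_iff_norm.2 (norm_conj_axial_mul_sq hu hu')⟩ D.2 D'.2

theorem exists_smul_halfRep_one_mul_iff (u u' y y' : UnitQuat) :
    (∃ w : UnitQuat, toConjAct w • halfRep 1 y = halfRep 1 (u * y) ∧
        toConjAct w • halfRep 1 y' = halfRep 1 (u' * y')) ↔ u' = u ∨ u' = -u := by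
  have hmul (v z : UnitQuat) : halfRep 1 (v * z) = toConjAct v • halfRep 1 z := by
    rw [halfRep_one, halfRep_one z, map_mul, mul_smul]
  rw [hmul, hmul]
  constructor
  · rintro ⟨w, h, h'⟩
    rcases eq_or_eq_neg_of_smul_halfRep_eq zero_lt_one h with rfl | rfl <;>
    rcases eq_or_eq_neg_of_smul_halfRep_eq zero_lt_one h' with h | h <;>
    grind [neg_neg]
  · rintro (rfl | rfl)
    · exact ⟨_, rfl, rfl⟩
    · refine ⟨u, rfl, ?_⟩
      ext <;> simp [ConjAct.toConjAct_smul]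

theorem exists_smul_halfRep_iff (D D' : unitInterval) (y y' z z' : UnitQuat) :
    (∃ w : UnitQuat, toConjAct w • halfRep D y = halfRep D' z ∧
        toConjAct w • halfRep D y' = halfRep D' z') ↔
      ∃ c : ℂ, c ≠ 0 ∧ pairMatrix D' z z' = c • pairMatrix D y y' := by
  obtain ⟨u, rfl⟩ : ∃ u, z = u * y := ⟨z * y⁻¹, by group⟩
  obtain ⟨u', rfl⟩ : ∃ u', z' = u' * y' := ⟨z' * y'⁻¹, by group⟩
  by_cases hD : D < 1 ∨ D' < 1
  · rw [exists_smul_halfRep_mul_iff hD, exists_pairMatrix_mul_eq_smul_iff hD]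
  · rw [not_or, not_lt, not_lt] at hD
    obtain rfl := le_antisymm unitInterval.le_one' hD.1
    obtain rfl := le_antisymm unitInterval.le_one' hD.2
    simp only [exists_smul_halfRep_one_mul_iff, pairMatrix, Set.Icc.coe_one, blend_one,
      exists_svdMatrix_one_eq_smul_iff]

end fibres

/-! ### The two quotient maps -/

theorem continuous_poleDir : Continuous poleDir := by
  unfold poleDir
  fun_prop

theorem continuous_equator : Continuous equator :=
  UnitQuat.continuous_mk continuous_const continuous_subtype_val _

theorem continuous_twist : Continuous twist :=
  UnitQuat.continuous_mk (continuous_subtype_val.comp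
    (continuous_halfAngle.comp (continuous_inclusion _))) continuous_const _

section continuity

variable {E : Type*} [TopologicalSpace E] {D : E → unitInterval} {y y' : E → UnitQuat}

theorem continuous_phase (hD : Continuous D) (hy : Continuous y) :
    Continuous fun e ↦ phase (D e) (y e) := by
  have hτ : Continuous fun e ↦ transverse (poleDir (y e)) :=
    UnitQuat.continuous_transverse.comp (continuous_poleDir.comp hy)
  refine continuous_halfAngle.comp (Continuous.subtype_mk (Continuous.div ?_ ?_ fun e ↦ ?_) _)
  · fun_prop
  · fun_prop
  · have := one_sub_mul_norm_transverse_sq_le_one (D e) (poleDir (y e))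
    linarith

theorem continuous_halfRep (hD : Continuous D) (hy : Continuous y) :
    Continuous fun e ↦ halfRep (D e) (y e) := by
  have he := continuous_twist.comp hD
  have hp := continuous_equator.comp (continuous_phase hD hy)
  have hn := continuous_equator.comp (continuous_phase hD hy).inv
  exact ((he.mul ((hy.mul hn).mul hy.inv)).mul he).prodMk
    ((he.pow 2).inv.mul ((hy.mul hp).mul hy.inv))

theorem continuous_axisSq : Continuous axisSq := by
  have h : Continuous fun y ↦ halfRep 0 y := continuous_halfRep continuous_const continuous_id
  unfold axisSq
  exact (((UnitQuat.continuous_transverse.comp h.fst).pow 2).add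
    ((UnitQuat.continuous_transverse.comp h.snd).pow 2)).div_const 4

theorem continuous_blend {z : E → ℂ} (hD : Continuous D) (hz : Continuous z) :
    Continuous fun e ↦ blend (D e) (z e) := by
  unfold blend
  fun_prop

theorem continuous_pairMatrix (hD : Continuous D) (hy : Continuous y) (hy' : Continuous y') :
    Continuous fun e ↦ pairMatrix (D e) (y e) (y' e) := by
  have hm := continuous_blend hD ((Complex.continuous_conj.comp
    (continuous_axisSq.comp hy)).mul (continuous_axisSq.comp hy'))
  refine ((continuous_toMatrix.comp hy.inv).matrix_mul (Continuous.matrix_diagonal ?_)).matrix_mul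
    (continuous_toMatrix.comp hy')
  exact continuous_pi fun i ↦ by fin_cases i; exacts [continuous_const, hm]

end continuity

/-- The representation of the genus two surface group glued from two representations of the
punctured torus group with the same boundary holonomy. The generators of the second one are
interchanged, which inverts their commutator. -/
def glue (p p' : UnitQuat × UnitQuat) (h : ⁅p.1, p.2⁆ = ⁅p'.1, p'.2⁆) : GenusTwoRepSpace :=
  ⟨(p.1, p.2, p'.2, p'.1), p.1.norm_coe, p.2.norm_coe, p'.2.norm_coe, p'.1.norm_coe, by
    have h1 : ⁅p.1, p.2⁆ * ⁅p'.2, p'.1⁆ = 1 := by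
      rw [h, ← commutatorElement_inv p'.1, mul_inv_cancel]
    exact congrArg Subtype.val h1⟩

theorem exists_eq_glue (t : GenusTwoRepSpace) : ∃ p p' h, t = glue p p' h := by
  obtain ⟨⟨R, S, R', S'⟩, hR, hS, hR', hS', h⟩ := t
  let q (x : ℍ[ℝ]) (hx : ‖x‖ = 1) : UnitQuat := ⟨x, mem_sphere_zero_iff_norm.2 hx⟩
  have h1 : ⁅q R hR, q S hS⁆ * ⁅q R' hR', q S' hS'⁆ = 1 := Subtype.ext h
  refine ⟨(q R hR, q S hS), (q S' hS', q R' hR'), ?_, rfl⟩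
  rw [← commutatorElement_inv (q R' hR')]
  exact eq_inv_of_mul_eq_one_left h1

theorem conjRel_glue_iff {p p' q q' : UnitQuat × UnitQuat} (h : ⁅p.1, p.2⁆ = ⁅p'.1, p'.2⁆)
    (h' : ⁅q.1, q.2⁆ = ⁅q'.1, q'.2⁆) :
    conjRel (glue p p' h) (glue q q' h') ↔
      ∃ u : UnitQuat, toConjAct u • p = q ∧ toConjAct u • p' = q' := by
  have coe_conj (u x y : UnitQuat) :
      toConjAct u • x = y ↔ (y : ℍ[ℝ]) = (u : ℍ[ℝ]) * x * (u : ℍ[ℝ])⁻¹ :=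
    eq_comm.trans Subtype.ext_iff
  simp only [Prod.ext_iff, Prod.smul_fst, Prod.smul_snd, coe_conj]
  constructor
  · rintro ⟨u, hu, h1, h2, h3, h4⟩
    exact ⟨⟨u, mem_sphere_zero_iff_norm.2 hu⟩, ⟨h1, h2⟩, h4, h3⟩
  · rintro ⟨u, ⟨h1, h2⟩, h4, h3⟩
    exact ⟨u, u.norm_coe, h1, h2, h3, h4⟩

theorem equivalence_conjRel : Equivalence conjRel where
  refl s := by
    obtain ⟨p, p', h, rfl⟩ := exists_eq_glue s
    exact (conjRel_glue_iff h h).2 ⟨1, by simp⟩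
  symm {s t} hst := by
    obtain ⟨p, p', h, rfl⟩ := exists_eq_glue s
    obtain ⟨q, q', h', rfl⟩ := exists_eq_glue t
    obtain ⟨u, rfl, rfl⟩ := (conjRel_glue_iff h h').1 hst
    exact (conjRel_glue_iff h' h).2 ⟨u⁻¹, by simp⟩
  trans {s t r} hst htr := by
    obtain ⟨p, p', h, rfl⟩ := exists_eq_glue s
    obtain ⟨q, q', h', rfl⟩ := exists_eq_glue t
    obtain ⟨r, r', h'', rfl⟩ := exists_eq_glue r
    obtain ⟨u, rfl, rfl⟩ := (conjRel_glue_iff h h').1 hst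
    obtain ⟨v, rfl, rfl⟩ := (conjRel_glue_iff h' h'').1 htr
    exact (conjRel_glue_iff h h'').2 ⟨v * u, by simp [mul_smul]⟩

theorem continuous_glue {E : Type*} [TopologicalSpace E] {f g : E → UnitQuat × UnitQuat}
    (hf : Continuous f) (hg : Continuous g) (h : ∀ e, ⁅(f e).1, (f e).2⁆ = ⁅(g e).1, (g e).2⁆) :
    Continuous fun e ↦ glue (f e) (g e) (h e) := by
  have hval : Continuous (Subtype.val : UnitQuat → ℍ[ℝ]) := continuous_subtype_val
  exact ((hval.comp hf.fst).prodMk ((hval.comp hf.snd).prodMk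
    ((hval.comp hg.snd).prodMk (hval.comp hg.fst)))).subtype_mk _

theorem commutator_halfRep_eq (D : unitInterval) (y y' : UnitQuat) :
    ⁅(halfRep D y).1, (halfRep D y).2⁆ = ⁅(halfRep D y').1, (halfRep D y').2⁆ := by
  rw [(isCommutatorRoot_halfRep D y).commutator_eq, (isCommutatorRoot_halfRep D y').commutator_eq]

/-- The representation of the genus two surface group glued from two half representations with the
same twist, conjugated by `u`. -/
def pairRep (u : UnitQuat) (D : unitInterval) (y y' : UnitQuat) : GenusTwoRepSpace :=
  glue (toConjAct u • halfRep D y) (toConjAct u • halfRep D y') (by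
    simp only [Prod.smul_fst, Prod.smul_snd, ConjAct.toConjAct_smul, ← conjugate_commutatorElement,
      commutator_halfRep_eq D y y'])

theorem exists_pairRep_eq (t : GenusTwoRepSpace) : ∃ u D y y', pairRep u D y y' = t := by
  obtain ⟨p, p', h, rfl⟩ := exists_eq_glue t
  obtain ⟨D, y, y', u, hu, hu'⟩ := exists_smul_eq_halfRep h
  refine ⟨u⁻¹, D, y, y', ?_⟩
  simp [pairRep, ← hu, ← hu']

theorem continuous_pairRep : Continuous fun q : UnitQuat × unitInterval × UnitQuat × UnitQuat ↦
    pairRep q.1 q.2.1 q.2.2.1 q.2.2.2 := by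
  have hu := continuous_fst (X := UnitQuat) (Y := unitInterval × UnitQuat × UnitQuat)
  have smul {f : UnitQuat × unitInterval × UnitQuat × UnitQuat → UnitQuat × UnitQuat}
      (hf : Continuous f) : Continuous fun q ↦ toConjAct q.1 • f q :=
    ((hu.mul hf.fst).mul hu.inv).prodMk ((hu.mul hf.snd).mul hu.inv)
  exact continuous_glue (smul (continuous_halfRep (by fun_prop) (by fun_prop)))
    (smul (continuous_halfRep (by fun_prop) (by fun_prop))) _

theorem conjRel_pairRep_iff (u u' : UnitQuat) (D D' : unitInterval) (y y' z z' : UnitQuat) :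
    conjRel (pairRep u D y y') (pairRep u' D' z z') ↔
      ∃ c : ℂ, c ≠ 0 ∧ pairMatrix D' z z' = c • pairMatrix D y y' := by
  rw [pairRep, pairRep, conjRel_glue_iff, ← exists_smul_halfRep_iff]
  constructor
  · rintro ⟨w, h, h'⟩
    refine ⟨u'⁻¹ * w * u, ?_, ?_⟩
    · rw [map_mul, map_mul, mul_smul, mul_smul, h, map_inv, inv_smul_smul]
    · rw [map_mul, map_mul, mul_smul, mul_smul, h', map_inv, inv_smul_smul]
  · rintro ⟨w, h, h'⟩
    refine ⟨u' * w * u⁻¹, ?_, ?_⟩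
    · rw [map_mul, map_mul, mul_smul, mul_smul, map_inv, inv_smul_smul, h]
    · rw [map_mul, map_mul, mul_smul, mul_smul, map_inv, inv_smul_smul, h']

theorem equivalence_projRel : Equivalence projRel where
  refl v := ⟨1, one_ne_zero, by simp⟩
  symm := fun ⟨c, hc, h⟩ ↦ ⟨c⁻¹, inv_ne_zero hc, by rw [h, inv_smul_smul₀ hc]⟩
  trans := fun ⟨c, hc, h⟩ ⟨d, hd, h'⟩ ↦ ⟨d * c, mul_ne_zero hd hc, by rw [h', h, mul_smul]⟩

theorem projRel_iff_forall_mul_eq {v w : {v : Fin 4 → ℂ // v ≠ 0}} :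
    projRel v w ↔ ∀ i j, v.1 i * w.1 j = v.1 j * w.1 i := by
  constructor
  · rintro ⟨c, -, h⟩ i j
    simp only [h, Pi.smul_apply, smul_eq_mul]
    ring
  · intro h
    obtain ⟨i, hi⟩ := Function.ne_iff.1 v.2
    rw [Pi.zero_apply] at hi
    have hw : w.1 = (w.1 i / v.1 i) • v.1 := by
      ext j
      rw [Pi.smul_apply, smul_eq_mul, div_mul_eq_mul_div, eq_div_iff hi]
      linear_combination h i j
    exact ⟨w.1 i / v.1 i, fun h0 ↦ w.2 (by rw [hw, h0, zero_smul]), hw⟩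

theorem isOpenQuotientMap_mk_projRel : IsOpenQuotientMap (Quot.mk projRel) := by
  refine ⟨Quot.mk_surjective, continuous_quot_mk, fun U hU ↦ ?_⟩
  let scale (c : ℂˣ) (v : {v : Fin 4 → ℂ // v ≠ 0}) : {v : Fin 4 → ℂ // v ≠ 0} :=
    ⟨c • v.1, (smul_ne_zero_iff_ne c).2 v.2⟩
  have hscale (c : ℂˣ) : Continuous (scale c) :=
    (continuous_subtype_val.const_smul c).subtype_mk _
  have hpre : Quot.mk projRel ⁻¹' (Quot.mk projRel '' U) = ⋃ c, scale c ⁻¹' U := by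
    ext v
    simp only [Set.mem_preimage, Set.mem_image, Set.mem_iUnion]
    constructor
    · rintro ⟨w, hw, hwv⟩
      obtain ⟨c, hc, h⟩ := (equivalence_projRel.quot_mk_eq_iff _ _).1 hwv.symm
      exact ⟨Units.mk0 c hc, (Subtype.ext h : w = scale (Units.mk0 c hc) v) ▸ hw⟩
    · rintro ⟨c, hc⟩
      exact ⟨_, hc, (Quot.sound ⟨c, c.ne_zero, rfl⟩).symm⟩
  exact isQuotientMap_quot_mk.isOpen_preimage.1
    (hpre ▸ isOpen_iUnion fun c ↦ hU.preimage (hscale c))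

instance : T2Space CP3 := by
  rw [t2Space_iff_of_isOpenQuotientMap isOpenQuotientMap_mk_projRel]
  simp only [equivalence_projRel.quot_mk_eq_iff, projRel_iff_forall_mul_eq, Set.ofPred_forall]
  refine isClosed_iInter fun i ↦ isClosed_iInter fun j ↦ ?_
  have hfst (k : Fin 4) : Continuous fun p : {v : Fin 4 → ℂ // v ≠ 0} × {v : Fin 4 → ℂ // v ≠ 0} ↦
      p.1.1 k := (continuous_apply k).comp (continuous_subtype_val.comp continuous_fst)
  have hsnd (k : Fin 4) : Continuous fun p : {v : Fin 4 → ℂ // v ≠ 0} × {v : Fin 4 → ℂ // v ≠ 0} ↦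
      p.2.1 k := (continuous_apply k).comp (continuous_subtype_val.comp continuous_snd)
  exact isClosed_eq ((hfst i).mul (hsnd j)) ((hfst j).mul (hsnd i))

/-- An identification of the complex `2 × 2` matrices with `ℂ⁴`; any linear one will do. -/
def matrixEquiv : Matrix (Fin 2) (Fin 2) ℂ ≃L[ℂ] (Fin 4 → ℂ) :=
  ContinuousLinearEquiv.ofFinrankEq (by simp [Module.finrank_matrix])

/-- The vector of `ℂ⁴` given by the entries of `pairMatrix D y y'`. -/
def pairVector (D : unitInterval) (y y' : UnitQuat) : {v : Fin 4 → ℂ // v ≠ 0} :=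
  ⟨matrixEquiv (pairMatrix D y y'), (map_ne_zero_iff _ matrixEquiv.injective).2
    (svdMatrix_ne_zero _ _ _)⟩

theorem projRel_pairVector_iff (D D' : unitInterval) (y y' z z' : UnitQuat) :
    projRel (pairVector D y y') (pairVector D' z z') ↔
      ∃ c : ℂ, c ≠ 0 ∧ pairMatrix D' z z' = c • pairMatrix D y y' := by
  simp only [projRel, pairVector, ← map_smul, matrixEquiv.injective.eq_iff]

theorem exists_projRel_pairVector (v : {v : Fin 4 → ℂ // v ≠ 0}) :
    ∃ D y y', projRel (pairVector D y y') v := by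
  obtain ⟨D, c, y, y', hc, h⟩ := exists_eq_smul_pairMatrix
    ((map_ne_zero_iff _ matrixEquiv.symm.injective).2 v.2)
  exact ⟨D, y, y', c, hc, by rw [pairVector, ← map_smul, ← h, matrixEquiv.apply_symm_apply]⟩

theorem continuous_pairVector :
    Continuous fun q : UnitQuat × unitInterval × UnitQuat × UnitQuat ↦
      pairVector q.2.1 q.2.2.1 q.2.2.2 :=
  (matrixEquiv.continuous.comp
    (continuous_pairMatrix (by fun_prop) (by fun_prop) (by fun_prop))).subtype_mk _

theorem isQuotientMap_mk_pairRep :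
    IsQuotientMap fun q : UnitQuat × unitInterval × UnitQuat × UnitQuat ↦
      Quot.mk conjRel (pairRep q.1 q.2.1 q.2.2.1 q.2.2.2) := by
  refine isQuotientMap_quot_mk.comp
    (continuous_pairRep.isClosedMap.isQuotientMap continuous_pairRep fun t ↦ ?_)
  obtain ⟨u, D, y, y', h⟩ := exists_pairRep_eq t
  exact ⟨(u, D, y, y'), h⟩

theorem isQuotientMap_mk_pairVector :
    IsQuotientMap fun q : UnitQuat × unitInterval × UnitQuat × UnitQuat ↦
      Quot.mk projRel (pairVector q.2.1 q.2.2.1 q.2.2.2) := by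
  have hcont := isOpenQuotientMap_mk_projRel.continuous.comp continuous_pairVector
  refine hcont.isClosedMap.isQuotientMap hcont (Quot.ind fun v ↦ ?_)
  obtain ⟨D, y, y', h⟩ := exists_projRel_pairVector v
  exact ⟨(1, D, y, y'), Quot.sound h⟩

theorem nonempty_homeomorph_of_isQuotientMap {X Y Z : Type*} [TopologicalSpace X]
    [TopologicalSpace Y] [TopologicalSpace Z] {f : X → Y} {g : X → Z} (hf : IsQuotientMap f)
    (hg : IsQuotientMap g) (h : ∀ a b, f a = f b ↔ g a = g b) : Nonempty (Y ≃ₜ Z) := by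
  have hker : Setoid.ker f = Setoid.ker g := Setoid.ext h
  have hY := IsQuotientMap.homeomorph (f := ⟨f, hf.continuous⟩) hf
  have hZ := IsQuotientMap.homeomorph (f := ⟨g, hg.continuous⟩) hg
  exact ⟨hY.symm.trans (hker ▸ hZ)⟩

/-- The `SU(2)` character variety of the genus two surface is homeomorphic to `ℂP³`. -/
theorem chiF2_homeomorph_CP3 : Nonempty (ChiF2 ≃ₜ CP3) := by
  refine nonempty_homeomorph_of_isQuotientMap isQuotientMap_mk_pairRep
    isQuotientMap_mk_pairVector fun q r ↦ ?_
  rw [equivalence_conjRel.quot_mk_eq_iff, equivalence_projRel.quot_mk_eq_iff,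
    conjRel_pairRep_iff, projRel_pairVector_iff]
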